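/- arXiv:1711.01975 — 4 statements merged into one kernel-verified Lean document; each statement's English description precedes it below -/
import Mathlib

section
/- Let k ∈ {3,4} and h ∈ ℕ. There exist ε₀ > 0 and C > 1 such that for every ε ∈ (0, ε₀) the following holds with very high probability, where p = n^{−ε}, H ~ H_k(n;p), π : [n] ↪ F* is a uniformly random injection independent of H, T is the template, G₀ = {e ∈ H : e is facet-disjoint from T}, L₀ = K_{k−1}(G₀), and D₀ = k|G₀|/|L₀|: (1) |G₀| = (1 ± Cp)·C(n,k)·p; (2) for every f ∈ L₀, |G₀(f)| = (1 ± Cp)·D₀; (3) |L₀| = (1 ± Cp)·C(n,k−1); (4) D₀ = (1 ± Cp)·np; (5) L₀ is (Cp,h)-typical; (6) π(L₀) is C-affine-bounded. -/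
open Finset

/-- The complete `k`-uniform hypergraph on `[n]`. -/
def allK (n k : ℕ) : Finset (Finset (Fin n)) :=
  Finset.univ.powersetCard k

open Classical in
/-- Probability of the event `E` when `H ~ H_k(n;p)` and `π : [n] ↪ F*` is an
independent uniformly random injection. -/
noncomputable def hypInjProb (n k : ℕ) (F : Type*) [Fintype F] [DecidableEq F] [Zero F]
    (p : ℝ) (E : Finset (Finset (Fin n)) → (Fin n → F) → Prop) : ℝ :=
  (∑ π ∈ (Finset.univ : Finset (Fin n → F)).filter
        (fun π => Function.Injective π ∧ ∀ v, π v ≠ 0),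
      ∑ H ∈ (allK n k).powerset,
        if E H π then p ^ H.card * (1 - p) ^ ((allK n k).card - H.card) else 0) /
    (((Finset.univ : Finset (Fin n → F)).filter
        (fun π => Function.Injective π ∧ ∀ v, π v ≠ 0)).card : ℝ)

/-- A set `S ⊆ F^ι` is `C`-affine-bounded if for every affine subspace `A` of
dimension at least 1, `|A ∩ S| ≤ C·|A|·|S|/|F|^{|ι|}`. -/
def AffineBounded (F : Type*) [Field F] [Fintype F] {ι : Type*} [Fintype ι]
    (C : ℝ) (S : Set (ι → F)) : Prop :=
  ∀ A : AffineSubspace F (ι → F), (A : Set (ι → F)).Nonempty →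
    1 ≤ Module.finrank F A.direction →
    (Set.ncard ((A : Set (ι → F)) ∩ S) : ℝ) ≤
      C * (Nat.card (A : Set (ι → F))) * (Set.ncard S) / (Fintype.card F : ℝ) ^ (Fintype.card ι)

/-- A `(k-1)`-uniform hypergraph `G` on `[n]` is `(c,h)`-typical if for every
collection of at most `h` distinct `(k-2)`-subsets `S_1, …, S_ℓ`,
`|∩_i G(S_i)| = (1 ± c)·d(G)^ℓ·n`. -/
def IsTypical (n k : ℕ) (c : ℝ) (h : ℕ) (G : Finset (Finset (Fin n))) : Prop :=
  ∀ 𝒮 : Finset (Finset (Fin n)), 𝒮.Nonempty → 𝒮.card ≤ h →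
    (∀ s ∈ 𝒮, s.card = k - 2) →
    |((Finset.univ.filter fun v : Fin n => ∀ s ∈ 𝒮, v ∉ s ∧ insert v s ∈ G).card : ℝ) -
        ((G.card : ℝ) / (n.choose (k - 1)) : ℝ) ^ 𝒮.card * n| ≤
      c * ((G.card : ℝ) / (n.choose (k - 1)) : ℝ) ^ 𝒮.card * n

section RandomSubset

variable {α : Type*}

/-- The probability of `H` as a `p`-random subset of `E`. -/
def subsetWeight (E : Finset α) (p : ℝ) (H : Finset α) : ℝ :=
  p ^ H.card * (1 - p) ^ (E.card - H.card)

open Classical in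
/-- The probability that a `p`-random subset of `E` satisfies `A`. -/
noncomputable def subsetProb (E : Finset α) (p : ℝ) (A : Finset α → Prop) : ℝ :=
  ∑ H ∈ E.powerset, if A H then subsetWeight E p H else 0

theorem subsetWeight_nonneg (E : Finset α) {p : ℝ} (hp0 : 0 ≤ p) (hp1 : p ≤ 1) (H : Finset α) :
    0 ≤ subsetWeight E p H :=
  mul_nonneg (pow_nonneg hp0 _) (pow_nonneg (sub_nonneg.2 hp1) _)

/-- A `p`-random subset contains a fixed set `A` with probability `p ^ |A|`. -/
theorem sum_subsetWeight_superset [DecidableEq α] (E : Finset α) (p : ℝ) {A : Finset α} (hA : A ⊆ E) :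
    ∑ H ∈ E.powerset, (if A ⊆ H then subsetWeight E p H else 0) = p ^ A.card := by
  have key := Finset.prod_add (fun _ : α => p) (fun e => if e ∈ A then 0 else 1 - p) E
  have h1 : ∏ e ∈ E, (p + if e ∈ A then 0 else 1 - p) = p ^ A.card := by
    rw [← Finset.prod_sdiff hA, Finset.prod_eq_one, one_mul]
    · rw [← Finset.prod_const]
      exact Finset.prod_congr rfl fun e he => by simp [he]
    · intro e he
      simp [(Finset.mem_sdiff.1 he).2]
  rw [← h1, key]
  refine Finset.sum_congr rfl fun H hH => ?_
  have hHE := Finset.mem_powerset.1 hH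
  rw [Finset.prod_const]
  split_ifs with h
  · rw [subsetWeight, ← Finset.card_sdiff_of_subset hHE, ← Finset.prod_const (1 - p)]
    congr 1
    refine Finset.prod_congr rfl fun e he => ?_
    rw [if_neg fun hA' => (Finset.mem_sdiff.1 he).2 (h hA')]
  · obtain ⟨e, heA, heH⟩ := Finset.not_subset.1 h
    refine (mul_eq_zero_of_right _ ?_).symm
    exact Finset.prod_eq_zero (Finset.mem_sdiff.2 ⟨hA heA, heH⟩) (if_pos heA)

theorem sum_subsetWeight [DecidableEq α] (E : Finset α) (p : ℝ) :
    ∑ H ∈ E.powerset, subsetWeight E p H = 1 := by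
  simpa using sum_subsetWeight_superset E p (Finset.empty_subset E)

/-- Probability generating function of the number of pairwise disjoint blocks of size `r`
contained in a random subset. -/
theorem sum_subsetWeight_mul_pow [DecidableEq α] {ι : Type*} [DecidableEq ι]
    (E : Finset α) (p y : ℝ)
    (V : Finset ι) (B : ι → Finset α) (r : ℕ) (hBE : ∀ v ∈ V, B v ⊆ E)
    (hcard : ∀ v ∈ V, (B v).card = r) (hdisj : (V : Set ι).PairwiseDisjoint B) :
    ∑ H ∈ E.powerset, subsetWeight E p H * y ^ (V.filter fun v => B v ⊆ H).card =
      (1 + (y - 1) * p ^ r) ^ V.card := by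
  have expand (H : Finset α) : y ^ (V.filter fun v => B v ⊆ H).card =
      ∑ W ∈ V.powerset, (y - 1) ^ W.card * if W.biUnion B ⊆ H then 1 else 0 := by
    have := Finset.prod_add (fun v => if B v ⊆ H then y - 1 else 0) (fun _ => (1 : ℝ)) V
    have h2 : ∏ v ∈ V, ((if B v ⊆ H then y - 1 else 0) + 1) =
        y ^ (V.filter fun v => B v ⊆ H).card := by
      rw [← Finset.prod_const, Finset.prod_filter]
      refine Finset.prod_congr rfl fun v _ => ?_
      split_ifs <;> ring
    rw [← h2, this]
    refine Finset.sum_congr rfl fun W _ => ?_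
    rw [Finset.prod_const_one, mul_one]
    split_ifs with h
    · rw [mul_one, ← Finset.prod_const]
      refine Finset.prod_congr rfl fun v hv => ?_
      rw [if_pos ((Finset.subset_biUnion_of_mem B hv).trans h)]
    · rw [mul_zero]
      rw [Finset.biUnion_subset] at h
      push Not at h
      obtain ⟨v, hv, hvH⟩ := h
      exact Finset.prod_eq_zero hv (if_neg hvH)
  calc _ = ∑ W ∈ V.powerset, (y - 1) ^ W.card *
        ∑ H ∈ E.powerset, (if W.biUnion B ⊆ H then subsetWeight E p H else 0) := by
        simp_rw [expand, Finset.mul_sum]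
        rw [Finset.sum_comm]
        refine Finset.sum_congr rfl fun W _ => Finset.sum_congr rfl fun H _ => ?_
        split_ifs <;> ring
    _ = ∑ W ∈ V.powerset, ((y - 1) * p ^ r) ^ W.card * 1 ^ (V.card - W.card) := by
        refine Finset.sum_congr rfl fun W hW => ?_
        have hWV := Finset.mem_powerset.1 hW
        rw [sum_subsetWeight_superset E p
          (Finset.biUnion_subset.2 fun v hv => hBE v (hWV hv)),
          Finset.card_biUnion fun v hv w hw hvw => hdisj (hWV hv) (hWV hw) hvw,
          Finset.sum_congr rfl fun v hv => hcard v (hWV hv), Finset.sum_const, smul_eq_mul,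
          mul_pow, ← pow_mul, mul_comm r, one_pow, mul_one]
    _ = _ := by rw [Finset.sum_pow_mul_eq_add_pow, add_comm]

/-- Exponential Markov inequality for the number of disjoint blocks in a random subset. -/
theorem subsetProb_le_exp [DecidableEq α] {ι : Type*} [DecidableEq ι]
    (E : Finset α) {p : ℝ} (hp0 : 0 ≤ p)
    (hp1 : p ≤ 1) (V : Finset ι) (B : ι → Finset α) (r : ℕ) (hBE : ∀ v ∈ V, B v ⊆ E)
    (hcard : ∀ v ∈ V, (B v).card = r) (hdisj : (V : Set ι).PairwiseDisjoint B) (l t : ℝ) :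
    subsetProb E p (fun H => l * t ≤ l * (V.filter fun v => B v ⊆ H).card) ≤
      Real.exp (V.card * (p ^ r * (Real.exp l - 1)) - l * t) := by
  have hq0 : 0 ≤ p ^ r := pow_nonneg hp0 r
  have hq1 : p ^ r ≤ 1 := pow_le_one₀ hp0 hp1
  have hpgf := sum_subsetWeight_mul_pow E p (Real.exp l) V B r hBE hcard hdisj
  have hbase : 0 ≤ 1 + (Real.exp l - 1) * p ^ r := by nlinarith [Real.exp_pos l]
  have hub : (1 + (Real.exp l - 1) * p ^ r) ^ V.card ≤
      Real.exp (V.card * (p ^ r * (Real.exp l - 1))) := by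
    rw [Real.exp_nat_mul]
    refine pow_le_pow_left₀ hbase ?_ _
    linarith [Real.add_one_le_exp (p ^ r * (Real.exp l - 1))]
  rw [Real.exp_sub, le_div_iff₀ (Real.exp_pos _)]
  refine le_trans ?_ (hpgf.le.trans hub)
  rw [subsetProb, Finset.sum_mul]
  refine Finset.sum_le_sum fun H _ => ?_
  have hw := subsetWeight_nonneg E hp0 hp1 H
  split_ifs with h
  · rw [← Real.exp_nat_mul]
    refine mul_le_mul_of_nonneg_left (Real.exp_le_exp.2 ?_) hw
    linarith
  · rw [zero_mul]
    positivity

theorem subsetProb_mono (E : Finset α) {p : ℝ} (hp0 : 0 ≤ p) (hp1 : p ≤ 1)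
    {A A' : Finset α → Prop} (h : ∀ H ⊆ E, A H → A' H) : subsetProb E p A ≤ subsetProb E p A' := by
  refine Finset.sum_le_sum fun H hH => ?_
  have hw := subsetWeight_nonneg E hp0 hp1 H
  have := h H (Finset.mem_powerset.1 hH)
  split_ifs <;> tauto

theorem subsetProb_or_le (E : Finset α) {p : ℝ} (hp0 : 0 ≤ p) (hp1 : p ≤ 1)
    (A A' : Finset α → Prop) :
    subsetProb E p (fun H => A H ∨ A' H) ≤ subsetProb E p A + subsetProb E p A' := by
  rw [subsetProb, subsetProb, subsetProb, ← Finset.sum_add_distrib]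
  refine Finset.sum_le_sum fun H _ => ?_
  have hw := subsetWeight_nonneg E hp0 hp1 H
  split_ifs <;> first | tauto | linarith

theorem subsetProb_exists_le {ι : Type*} (E : Finset α) {p : ℝ} (hp0 : 0 ≤ p) (hp1 : p ≤ 1)
    (I : Finset ι) (A : ι → Finset α → Prop) {b : ℝ} (hb : ∀ i ∈ I, subsetProb E p (A i) ≤ b) :
    subsetProb E p (fun H => ∃ i ∈ I, A i H) ≤ I.card * b := by
  classical
  rw [← nsmul_eq_mul]
  refine le_trans ?_ (Finset.sum_le_card_nsmul I _ _ hb)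
  simp only [subsetProb]
  rw [Finset.sum_comm]
  refine Finset.sum_le_sum fun H _ => ?_
  have hw := subsetWeight_nonneg E hp0 hp1 H
  have hnn : ∀ i ∈ I, 0 ≤ if A i H then subsetWeight E p H else 0 := fun i _ => by
    split_ifs <;> simp [hw]
  split_ifs with h
  · obtain ⟨i, hi, hA⟩ := h
    refine le_trans ?_ (Finset.single_le_sum hnn hi)
    rw [if_pos hA]
  · exact Finset.sum_nonneg hnn

theorem subsetProb_add_not [DecidableEq α] (E : Finset α) (p : ℝ) (A : Finset α → Prop) :
    subsetProb E p A + subsetProb E p (fun H => ¬ A H) = 1 := by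
  rw [← sum_subsetWeight E p, subsetProb, subsetProb, ← Finset.sum_add_distrib]
  refine Finset.sum_congr rfl fun H _ => ?_
  split_ifs <;> simp

theorem one_sub_le_subsetProb [DecidableEq α] (E : Finset α) {p b : ℝ} (hp0 : 0 ≤ p)
    (hp1 : p ≤ 1) {A A' : Finset α → Prop} (h : ∀ H ⊆ E, ¬ A' H → A H)
    (hA' : subsetProb E p A' ≤ b) : 1 - b ≤ subsetProb E p A := by
  have h1 := subsetProb_add_not E p A
  have h2 : subsetProb E p (fun H => ¬ A H) ≤ subsetProb E p A' :=
    subsetProb_mono E hp0 hp1 fun H hH hA => not_not.1 fun hn => hA (h H hH hn)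
  linarith

/-- Upper tail: `|V| ≤ N` disjoint blocks of size `r` rarely contribute `4 N p ^ r`. -/
theorem subsetProb_upper_tail [DecidableEq α] {ι : Type*} [DecidableEq ι]
    (E : Finset α) {p : ℝ} (hp0 : 0 ≤ p)
    (hp1 : p ≤ 1) (V : Finset ι) (B : ι → Finset α) (r : ℕ) (hBE : ∀ v ∈ V, B v ⊆ E)
    (hcard : ∀ v ∈ V, (B v).card = r) (hdisj : (V : Set ι).PairwiseDisjoint B) {N : ℝ}
    (hN : (V.card : ℝ) ≤ N) :
    subsetProb E p (fun H => 4 * (N * p ^ r) < (V.filter fun v => B v ⊆ H).card) ≤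
      Real.exp (-(N * p ^ r)) := by
  have hq0 : 0 ≤ p ^ r := pow_nonneg hp0 r
  refine (subsetProb_mono E hp0 hp1 fun H _ hH => ?_).trans
    ((subsetProb_le_exp E hp0 hp1 V B r hBE hcard hdisj 1 (4 * (N * p ^ r))).trans
      (Real.exp_le_exp.2 ?_))
  · rw [one_mul, one_mul]
    exact hH.le
  · have he : Real.exp 1 - 1 ≤ 2 := by linarith [Real.exp_one_lt_d9]
    have he0 : 0 ≤ Real.exp 1 - 1 := by linarith [Real.add_one_le_exp (1 : ℝ)]
    have hN0 : 0 ≤ N := (Nat.cast_nonneg _).trans hN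
    have h1 : (V.card : ℝ) * (p ^ r * (Real.exp 1 - 1)) ≤ N * (p ^ r * 2) := by gcongr
    have h2 : 0 ≤ N * p ^ r := mul_nonneg hN0 hq0
    linarith

/-- Two-sided Chernoff bound with relative deviation `p`, for the number of elements of a family
contained in a `p`-random subset. -/
theorem subsetProb_deviation [DecidableEq α] {ι : Type*} [DecidableEq ι]
    (E : Finset α) {p : ℝ} (hp0 : 0 ≤ p)
    (hp1 : p ≤ 1) (V : Finset ι) (B : ι → Finset α) (hBE : ∀ v ∈ V, B v ⊆ E)
    (hcard : ∀ v ∈ V, (B v).card = 1) (hdisj : (V : Set ι).PairwiseDisjoint B) :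
    subsetProb E p (fun H => p * (V.card * p) <
        |((V.filter fun v => B v ⊆ H).card : ℝ) - V.card * p|) ≤
      2 * Real.exp (-(V.card * p ^ 3 / 4)) := by
  have hexp (l : ℝ) (hl : |l| ≤ 1) : Real.exp l - 1 ≤ l + l ^ 2 := by
    have := Real.abs_exp_sub_one_sub_id_le hl
    linarith [(abs_le.1 this).2]
  have bound (s : ℝ) (hs : |s| = 1) :
      subsetProb E p (fun H => (s * p / 2) * (V.card * p + s * (p * (V.card * p))) ≤
        (s * p / 2) * (V.filter fun v => B v ⊆ H).card) ≤ Real.exp (-(V.card * p ^ 3 / 4)) := by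
    refine (subsetProb_le_exp E hp0 hp1 V B 1 hBE hcard hdisj _ _).trans (Real.exp_le_exp.2 ?_)
    have hl : |s * p / 2| ≤ 1 := by
      rw [abs_div, abs_mul, hs, abs_of_nonneg hp0]
      norm_num
      linarith
    have h1 := hexp _ hl
    have hs2 : s ^ 2 = 1 := by rw [← sq_abs, hs, one_pow]
    have h2 : (V.card : ℝ) * (p ^ 1 * (Real.exp (s * p / 2) - 1)) ≤
        V.card * (p ^ 1 * (s * p / 2 + (s * p / 2) ^ 2)) := by gcongr
    have h3 : (V.card : ℝ) * (p ^ 1 * (s * p / 2 + (s * p / 2) ^ 2)) -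
        s * p / 2 * (V.card * p + s * (p * (V.card * p))) =
        -(V.card * p ^ 3 / 4) + (s ^ 2 - 1) * (-(V.card * p ^ 3 / 4)) := by ring
    rw [hs2] at h3
    linarith
  have h1 := bound 1 (by simp)
  have h2 := bound (-1) (by simp)
  refine (subsetProb_mono E hp0 hp1 fun H _ hH => ?_).trans
    ((subsetProb_or_le E hp0 hp1 _ _).trans (add_le_add h1 h2)) |>.trans (by rw [two_mul])
  rcases lt_abs.1 hH with h | h
  · left
    refine mul_le_mul_of_nonneg_left ?_ (by linarith)
    linarith
  · right
    refine mul_le_mul_of_nonpos_left ?_ (by linarith)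
    linarith

end RandomSubset

section Deterministic

open Classical in
/-- Double counting of covered facets by their subsets of size one less. -/
theorem card_covered_le {n j : ℕ} (Cov : Finset (Fin n) → Prop) {p : ℝ}
    (hn : (2 * j : ℝ) ≤ n)
    (hb : ∀ S : Finset (Fin n), S.card = j →
      ((univ.filter fun v => v ∉ S ∧ Cov (insert v S)).card : ℝ) ≤ 8 * p * n) (hp : 0 ≤ p) :
    ((((univ : Finset (Fin n)).powersetCard (j + 1)).filter Cov).card : ℝ) ≤
      16 * p * n.choose (j + 1) := by
  set P := ((univ : Finset (Fin n)).powersetCard (j + 1)).filter Cov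
  have hdc := Finset.sum_card_bipartiteAbove_eq_sum_card_bipartiteBelow
    (s := (univ : Finset (Fin n)).powersetCard j) (t := P) (fun S f => S ⊆ f)
  have hbelow : ∀ f ∈ P, (Finset.bipartiteBelow (fun S f => S ⊆ f)
      ((univ : Finset (Fin n)).powersetCard j) f).card = j + 1 := by
    intro f hf
    have hfc : f.card = j + 1 := by
      simp only [P, mem_filter, mem_powersetCard] at hf
      exact hf.1.2
    have : Finset.bipartiteBelow (fun S f => S ⊆ f)
      ((univ : Finset (Fin n)).powersetCard j) f = f.powersetCard j := by
      ext S
      simp [Finset.mem_bipartiteBelow, mem_powersetCard, and_comm]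
    rw [this, card_powersetCard, hfc, Nat.choose_succ_self_right]
  rw [Finset.sum_congr rfl hbelow, Finset.sum_const, smul_eq_mul] at hdc
  have habove : ∀ S ∈ (univ : Finset (Fin n)).powersetCard j,
      ((Finset.bipartiteAbove (fun S f => S ⊆ f) P S).card : ℝ) ≤ 8 * p * n := by
    intro S hS
    have hSc : S.card = j := (mem_powersetCard.1 hS).2
    refine le_trans ?_ (hb S hSc)
    norm_cast
    refine (Finset.card_le_card ?_).trans (Finset.card_image_le (f := fun v => insert v S))
    intro f hf
    simp only [mem_bipartiteAbove, P, mem_filter, mem_powersetCard] at hf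
    obtain ⟨⟨⟨-, hfc⟩, hcov⟩, hSf⟩ := hf
    obtain ⟨v, hv, rfl⟩ := (Finset.covBy_iff_exists_insert (s := S) (t := f)).1
      ((Finset.covBy_iff_card_sdiff_eq_one).2 ⟨hSf, by rw [card_sdiff_of_subset hSf]; omega⟩)
    exact mem_image.2 ⟨v, by simp [hv, hcov], rfl⟩
  have hsum := Finset.sum_le_sum habove
  rw [Finset.sum_const, card_powersetCard, card_univ, Fintype.card_fin, nsmul_eq_mul] at hsum
  have hdc' : (∑ S ∈ (univ : Finset (Fin n)).powersetCard j,
      ((Finset.bipartiteAbove (fun S f => S ⊆ f) P S).card : ℝ)) = P.card * (j + 1) := by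
    exact_mod_cast hdc
  rw [hdc'] at hsum
  have hch : (n.choose (j + 1) : ℝ) * (j + 1) = n.choose j * (n - j) := by
    have h := Nat.choose_succ_right_eq n j
    have hjn : j ≤ n := by
      have : (j : ℝ) ≤ n := by linarith [(Nat.cast_nonneg j : (0 : ℝ) ≤ j)]
      exact_mod_cast this
    rw [← Nat.cast_sub hjn]
    exact_mod_cast h
  have hpos : (0 : ℝ) < j + 1 := by positivity
  refine le_of_mul_le_mul_right ?_ hpos
  calc (P.card : ℝ) * (j + 1) ≤ n.choose j * (8 * p * n) := hsum
    _ ≤ n.choose j * (8 * p * (2 * (n - j))) := by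
      gcongr
      linarith
    _ = 16 * p * (n.choose (j + 1) * (j + 1)) := by rw [hch]; ring
    _ = _ := by ring

open Classical in
/-- Degree estimate for an uncovered facet `f` in the hypergraph of edges all of whose facets
are uncovered. -/
theorem degree_uncovered {n j : ℕ} (Cov : Finset (Fin n) → Prop) {p : ℝ} (hp : 0 ≤ p)
    (H G0 : Finset (Finset (Fin n))) (hH : ∀ e ∈ H, e.card = j + 2)
    (hG0 : ∀ e, e ∈ G0 ↔ e ∈ H ∧ ∀ f ⊆ e, f.card = j + 1 → ¬ Cov f)
    (ha : ∀ f : Finset (Fin n), f.card = j + 1 →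
      |((H.filter fun e => f ⊆ e).card : ℝ) - n * p| ≤ 2 * p * (n * p))
    (hc : ∀ (S : Finset (Fin n)) (x : Fin n), S.card = j → x ∉ S →
      ((univ.filter fun v => v ∉ insert x S ∧ insert v (insert x S) ∈ H ∧
        Cov (insert v S)).card : ℝ) ≤ 9 * p * (n * p))
    (f : Finset (Fin n)) (hf : f.card = j + 1) (hcov : ¬ Cov f) :
    |((G0.filter fun e => f ⊆ e).card : ℝ) - n * p| ≤ (9 * j + 11) * p * (n * p) := by
  have hle : (G0.filter fun e => f ⊆ e).card ≤ (H.filter fun e => f ⊆ e).card :=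
    card_le_card fun e he => by
      rw [mem_filter] at he ⊢
      exact ⟨((hG0 e).1 he.1).1, he.2⟩
  have hge : (H.filter fun e => f ⊆ e).card ≤ (G0.filter fun e => f ⊆ e).card +
      ∑ x ∈ f, (univ.filter fun v => v ∉ insert x (f.erase x) ∧
        insert v (insert x (f.erase x)) ∈ H ∧ Cov (insert v (f.erase x))).card := by
    refine le_trans (card_le_card (t := (G0.filter fun e => f ⊆ e) ∪ f.biUnion fun x =>
      (univ.filter fun v => v ∉ insert x (f.erase x) ∧
        insert v (insert x (f.erase x)) ∈ H ∧ Cov (insert v (f.erase x))).image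
          fun v => insert v f) ?_) ((card_union_le _ _).trans (Nat.add_le_add_left
            (card_biUnion_le.trans (sum_le_sum fun x _ => card_image_le)) _))
    intro e he
    obtain ⟨heH, hfe⟩ := mem_filter.1 he
    rw [mem_union, mem_filter, hG0]
    by_cases hgood : ∀ g ⊆ e, g.card = j + 1 → ¬ Cov g
    · exact Or.inl ⟨⟨heH, hgood⟩, hfe⟩
    right
    push Not at hgood
    obtain ⟨g, hge, hgc, hgcov⟩ := hgood
    have hec := hH e heH
    obtain ⟨v, hv, rfl⟩ := (Finset.covBy_iff_exists_insert (s := f) (t := e)).1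
      ((Finset.covBy_iff_card_sdiff_eq_one).2 ⟨hfe, by rw [card_sdiff_of_subset hfe]; omega⟩)
    have hgf : g ≠ f := fun h => hcov (h ▸ hgcov)
    have hfg : ¬ f ⊆ g := fun h => hgf (eq_of_subset_of_card_le h (by omega)).symm
    obtain ⟨x, hxf, hxg⟩ := not_subset.1 hfg
    have hgeq : g = insert v (f.erase x) := by
      refine eq_of_subset_of_card_le (fun y hy => ?_) ?_
      · have hyx : y ≠ x := fun h => hxg (h ▸ hy)
        rcases mem_insert.1 (hge hy) with h | h
        · exact mem_insert.2 (Or.inl h)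
        · exact mem_insert.2 (Or.inr (mem_erase.2 ⟨hyx, h⟩))
      · refine (card_insert_le _ _).trans ?_
        rw [card_erase_of_mem hxf]
        omega
    refine mem_biUnion.2 ⟨x, hxf, mem_image.2 ⟨v, ?_, rfl⟩⟩
    rw [mem_filter, insert_erase hxf, ← hgeq]
    exact ⟨mem_univ _, hv, heH, hgcov⟩
  have hsum : ((∑ x ∈ f, (univ.filter fun v => v ∉ insert x (f.erase x) ∧
        insert v (insert x (f.erase x)) ∈ H ∧ Cov (insert v (f.erase x))).card : ℕ) : ℝ) ≤
        (j + 1) * (9 * p * (n * p)) := by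
    rw [Nat.cast_sum]
    refine (sum_le_sum fun x hx => hc (f.erase x) x ?_ (notMem_erase x f)).trans ?_
    · rw [card_erase_of_mem hx]
      omega
    · rw [sum_const, hf, nsmul_eq_mul]
      push_cast
      exact le_rfl
  have h1 := abs_le.1 (ha f hf)
  have hle' : ((G0.filter fun e => f ⊆ e).card : ℝ) ≤ (H.filter fun e => f ⊆ e).card := by
    exact_mod_cast hle
  have hge' : ((H.filter fun e => f ⊆ e).card : ℝ) ≤ (G0.filter fun e => f ⊆ e).card +
      (j + 1) * (9 * p * (n * p)) := by
    refine le_trans ?_ (add_le_add_right hsum _)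
    exact_mod_cast hge
  have hnp : 0 ≤ p * (n * p) := by positivity
  have hj : (0 : ℝ) ≤ j * (p * (n * p)) := by positivity
  rw [abs_le]
  constructor <;> linarith [h1.1, h1.2]

/-- Double counting of pairs (edge, facet of the edge). -/
theorem sum_degree_facets {n j : ℕ} (G0 L0 : Finset (Finset (Fin n)))
    (hcard : ∀ e ∈ G0, e.card = j + 2)
    (hL0 : ∀ f, f ∈ L0 ↔ ∃ e ∈ G0, f ⊆ e ∧ f.card = j + 1) :
    ∑ f ∈ L0, (G0.filter fun e => f ⊆ e).card = (j + 2) * G0.card := by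
  have hdc := Finset.sum_card_bipartiteAbove_eq_sum_card_bipartiteBelow
    (s := L0) (t := G0) (fun f e => f ⊆ e)
  have hbelow : ∀ e ∈ G0, (Finset.bipartiteBelow (fun f e => f ⊆ e) L0 e).card = j + 2 := by
    intro e he
    have : Finset.bipartiteBelow (fun f e => f ⊆ e) L0 e = e.powersetCard (j + 1) := by
      ext f
      rw [mem_bipartiteBelow, mem_powersetCard, hL0]
      exact ⟨fun ⟨⟨_, _, _, h⟩, h'⟩ => ⟨h', h⟩, fun ⟨h, h'⟩ => ⟨⟨e, he, h, h'⟩, h⟩⟩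
    rw [this, card_powersetCard, hcard e he, Nat.choose_succ_self_right]
  rw [sum_congr rfl hbelow, sum_const, smul_eq_mul, mul_comm] at hdc
  exact hdc

end Deterministic

section Conclusions

open Classical in
/-- A facet lies in the shadow of `G0` exactly when it is uncovered, provided the degrees of
uncovered facets are positive. -/
theorem mem_shadow_iff_uncovered {n j : ℕ} (Cov : Finset (Fin n) → Prop)
    (H G0 L0 : Finset (Finset (Fin n)))
    (hG0 : ∀ e, e ∈ G0 ↔ e ∈ H ∧ ∀ f ⊆ e, f.card = j + 1 → ¬ Cov f)
    (hL0 : ∀ f, f ∈ L0 ↔ ∃ e ∈ G0, f ⊆ e ∧ f.card = j + 1)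
    (hpos : ∀ f : Finset (Fin n), f.card = j + 1 → ¬ Cov f →
      0 < (G0.filter fun e => f ⊆ e).card) (f : Finset (Fin n)) :
    f ∈ L0 ↔ f.card = j + 1 ∧ ¬ Cov f := by
  rw [hL0]
  constructor
  · rintro ⟨e, he, hfe, hfc⟩
    exact ⟨hfc, ((hG0 e).1 he).2 f hfe hfc⟩
  · rintro ⟨hfc, hcov⟩
    obtain ⟨e, he⟩ := card_pos.1 (hpos f hfc hcov)
    rw [mem_filter] at he
    exact ⟨e, he.1, he.2, hfc⟩

open Classical in
theorem isTypical_of_uncovered {n j h : ℕ} (Cov : Finset (Fin n) → Prop) {p c : ℝ} (hp : 0 ≤ p)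
    (hpsmall : 32 * (h * p) ≤ 1) (hp16 : 16 * p ≤ 1) (hc : 32 * (h * p) ≤ c)
    (hjn : (j : ℝ) ≤ n * p) (L0 : Finset (Finset (Fin n)))
    (hL0 : ∀ f, f ∈ L0 ↔ f.card = j + 1 ∧ ¬ Cov f)
    (hb : ∀ S : Finset (Fin n), S.card = j →
      ((univ.filter fun v => v ∉ S ∧ Cov (insert v S)).card : ℝ) ≤ 8 * p * n)
    (hd1 : (L0.card : ℝ) / n.choose (j + 1) ≤ 1)
    (hd0 : 1 - 16 * p ≤ (L0.card : ℝ) / n.choose (j + 1)) :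
    IsTypical n (j + 2) c h L0 := by
  intro 𝒮 _ hcard h𝒮
  change |((univ.filter fun v : Fin n => ∀ s ∈ 𝒮, v ∉ s ∧ insert v s ∈ L0).card : ℝ) -
    ((L0.card : ℝ) / n.choose (j + 1)) ^ 𝒮.card * n| ≤
      c * ((L0.card : ℝ) / n.choose (j + 1)) ^ 𝒮.card * n
  have hSj : ∀ s ∈ 𝒮, s.card = j := h𝒮
  set d : ℝ := (L0.card : ℝ) / n.choose (j + 1)
  set A := univ.filter fun v : Fin n => ∀ s ∈ 𝒮, v ∉ s ∧ insert v s ∈ L0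
  have hd0' : 0 ≤ d := by linarith
  have hl : (𝒮.card : ℝ) ≤ h := by exact_mod_cast hcard
  have hlp : (𝒮.card : ℝ) * p ≤ h * p := by gcongr
  have hpow1 : d ^ 𝒮.card ≤ 1 := pow_le_one₀ hd0' hd1
  have hpow0 : 1 - 16 * (h * p) ≤ d ^ 𝒮.card := by
    have h1 := one_add_mul_le_pow (a := d - 1) (by linarith) 𝒮.card
    rw [add_sub_cancel] at h1
    have h2 : (𝒮.card : ℝ) * (-(16 * p)) ≤ 𝒮.card * (d - 1) := by
      gcongr
      linarith
    linarith
  have hAn : (A.card : ℝ) ≤ n := by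
    have := card_le_univ A
    rw [Fintype.card_fin] at this
    exact_mod_cast this
  have hcompl : n ≤ A.card + ∑ s ∈ 𝒮, (s.card +
      (univ.filter fun v => v ∉ s ∧ Cov (insert v s)).card) := by
    have hcov : (univ : Finset (Fin n)) ⊆ A ∪ 𝒮.biUnion fun s =>
        s ∪ univ.filter fun v => v ∉ s ∧ Cov (insert v s) := by
      intro v _
      rw [mem_union, or_iff_not_imp_left]
      intro hv
      simp only [A, mem_filter, mem_univ, true_and, not_forall] at hv
      obtain ⟨s, hs, hvs⟩ := hv
      refine mem_biUnion.2 ⟨s, hs, ?_⟩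
      by_cases hvs' : v ∈ s
      · exact mem_union_left _ hvs'
      · have : Cov (insert v s) := by
          by_contra hnc
          exact hvs ⟨hvs', (hL0 _).2 ⟨by rw [card_insert_of_notMem hvs', hSj s hs], hnc⟩⟩
        exact mem_union_right _ (by simp [hvs', this])
    have := card_le_card hcov
    rw [card_univ, Fintype.card_fin] at this
    exact this.trans ((card_union_le _ _).trans (Nat.add_le_add_left
      (card_biUnion_le.trans (sum_le_sum fun s _ => card_union_le _ _)) _))
  have hsum : ((∑ s ∈ 𝒮, (s.card +
      (univ.filter fun v => v ∉ s ∧ Cov (insert v s)).card) : ℕ) : ℝ) ≤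
      𝒮.card * (9 * (p * n)) := by
    push_cast
    refine (sum_le_card_nsmul 𝒮 _ (9 * (p * n)) fun s hs => ?_).trans (nsmul_eq_mul _ _).le
    have h1 := hb s (hSj s hs)
    have h2 : (s.card : ℝ) = j := by exact_mod_cast hSj s hs
    linarith
  have hA0 : (n : ℝ) - 16 * (h * p) * n ≤ A.card := by
    have h1 : (n : ℝ) ≤ A.card + 𝒮.card * (9 * (p * n)) :=
      le_trans (by exact_mod_cast hcompl) (add_le_add_right hsum _)
    have h2 : (𝒮.card * p) * (9 * n) ≤ (h * p) * (9 * (n : ℝ)) := by gcongr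
    have h3 : 0 ≤ h * p * n := by positivity
    linarith
  have hn0 : (0 : ℝ) ≤ n := Nat.cast_nonneg n
  have h4 : (1 - 16 * (h * p)) * n ≤ d ^ 𝒮.card * n := by gcongr
  have h5 : d ^ 𝒮.card * n ≤ 1 * n := by gcongr
  have h6 : 32 * (h * p) * (1 / 2) * n ≤ c * d ^ 𝒮.card * n := by
    have : 0 ≤ h * p := by positivity
    gcongr
    · linarith
    · linarith
  rw [abs_le]
  constructor <;> linarith

theorem affineBounded_of_card {n j : ℕ} {F : Type*} [Field F] [Fintype F] {C : ℝ}
    (hn : 2 * j ≤ n) (hF : Fintype.card F ≤ 4 * n) (L0 : Finset (Finset (Fin n)))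
    (hcard : ∀ f ∈ L0, f.card = j + 1)
    (hL : (n.choose (j + 1) : ℝ) ≤ 2 * L0.card) (hC : 2 * 8 ^ (j + 1) * (j + 1).factorial ≤ C)
    (π : Fin n → F) (hπ : Function.Injective π) (ord : Finset (Fin n) → Fin (j + 1) → Fin n)
    (hord : ∀ f : Finset (Fin n), f.card = j + 1 → Finset.image (ord f) Finset.univ = f) :
    AffineBounded F C ((fun f => π ∘ ord f) '' (L0 : Set (Finset (Fin n)))) := by
  intro A _ _
  have hinj : Set.InjOn (fun f => π ∘ ord f) (L0 : Set (Finset (Fin n))) := by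
    intro f hf g hg hfg
    have : ord f = ord g := hπ.comp_left hfg
    rw [← hord f (hcard f hf), ← hord g (hcard g hg), this]
  have hncard : Set.ncard ((fun f => π ∘ ord f) '' (L0 : Set (Finset (Fin n)))) = L0.card := by
    rw [hinj.ncard_image, Set.ncard_coe_finset]
  have hle : Set.ncard ((A : Set (Fin (j + 1) → F)) ∩
      ((fun f => π ∘ ord f) '' (L0 : Set (Finset (Fin n))))) ≤
      Nat.card (A : Set (Fin (j + 1) → F)) := by
    rw [Nat.card_coe_set_eq]
    exact Set.ncard_le_ncard Set.inter_subset_left (Set.toFinite _)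
  have hF0 : 0 < Fintype.card F := Fintype.card_pos
  have hF0' : (0 : ℝ) < (Fintype.card F : ℝ) ^ Fintype.card (Fin (j + 1)) := by positivity
  rw [hncard, le_div_iff₀ hF0', Fintype.card_fin]
  have hpow : ((Fintype.card F : ℝ)) ^ (j + 1) ≤ C * L0.card := by
    have h1 : (n : ℝ) ≤ 2 * ((n + 1 - (j + 1) : ℕ) : ℝ) := by
      norm_cast
      omega
    have h2 := Nat.pow_le_choose (α := ℝ) (j + 1) n
    calc ((Fintype.card F : ℝ)) ^ (j + 1) ≤ (8 * ((n + 1 - (j + 1) : ℕ) : ℝ)) ^ (j + 1) := by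
          have : (Fintype.card F : ℝ) ≤ 4 * n := by exact_mod_cast hF
          gcongr
          linarith
      _ = 8 ^ (j + 1) * ((n + 1 - (j + 1) : ℕ) : ℝ) ^ (j + 1) := mul_pow _ _ _
      _ ≤ 8 ^ (j + 1) * ((j + 1).factorial * n.choose (j + 1)) := by
          gcongr
          have hfac : (0 : ℝ) < (j + 1).factorial := by positivity
          exact (div_le_iff₀' hfac).1 h2
      _ ≤ 8 ^ (j + 1) * ((j + 1).factorial * (2 * L0.card)) := by gcongr
      _ = 2 * 8 ^ (j + 1) * (j + 1).factorial * L0.card := by ring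
      _ ≤ C * L0.card := by gcongr
  calc _ ≤ (Nat.card (A : Set (Fin (j + 1) → F)) : ℝ) * (C * L0.card) := by
        gcongr
    _ = _ := by ring

open Classical in
/-- All conclusions about `G0` and its shadow `L0` follow from local estimates on the degrees of
`H` and on the number of covered facets. -/
theorem conclusions_of_local {n j h : ℕ} (Cov : Finset (Fin n) → Prop) {p C : ℝ} (hp : 0 < p)
    (hC : 36 * ((j : ℝ) + 2) + 32 * h + 2 * 8 ^ (j + 1) * (j + 1).factorial ≤ C)
    (hsmall : (36 * ((j : ℝ) + 2) + 32 * h) * p ≤ 1)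
    (hnp : 4 * ((j : ℝ) + 2) ≤ n * p)
    (H G0 L0 : Finset (Finset (Fin n))) (hH : ∀ e ∈ H, e.card = j + 2)
    (hG0 : ∀ e, e ∈ G0 ↔ e ∈ H ∧ ∀ f ⊆ e, f.card = j + 1 → ¬ Cov f)
    (hL0 : ∀ f, f ∈ L0 ↔ ∃ e ∈ G0, f ⊆ e ∧ f.card = j + 1)
    (ha : ∀ f : Finset (Fin n), f.card = j + 1 →
      |((H.filter fun e => f ⊆ e).card : ℝ) - n * p| ≤ 2 * p * (n * p))
    (hb : ∀ S : Finset (Fin n), S.card = j →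
      ((univ.filter fun v => v ∉ S ∧ Cov (insert v S)).card : ℝ) ≤ 8 * p * n)
    (hc : ∀ (S : Finset (Fin n)) (x : Fin n), S.card = j → x ∉ S →
      ((univ.filter fun v => v ∉ insert x S ∧ insert v (insert x S) ∈ H ∧
        Cov (insert v S)).card : ℝ) ≤ 9 * p * (n * p))
    {F : Type*} [Field F] [Fintype F] (hF : Fintype.card F ≤ 4 * n)
    (π : Fin n → F) (hπ : Function.Injective π) (ord : Finset (Fin n) → Fin (j + 1) → Fin n)
    (hord : ∀ f : Finset (Fin n), f.card = j + 1 → Finset.image (ord f) Finset.univ = f)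
    {D0 : ℝ} (hD0 : D0 = (j + 2) * G0.card / L0.card) :
    |(G0.card : ℝ) - (n.choose (j + 2) : ℝ) * p| ≤ C * p * ((n.choose (j + 2) : ℝ) * p) ∧
    (∀ f ∈ L0, |((G0.filter fun e => f ⊆ e).card : ℝ) - D0| ≤ C * p * D0) ∧
    |(L0.card : ℝ) - (n.choose (j + 1) : ℝ)| ≤ C * p * (n.choose (j + 1) : ℝ) ∧
    |D0 - (n : ℝ) * p| ≤ C * p * ((n : ℝ) * p) ∧
    IsTypical n (j + 2) (C * p) h L0 ∧
    AffineBounded F C ((fun f => π ∘ ord f) '' (L0 : Set (Finset (Fin n)))) := by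
  have hj0 : (0 : ℝ) ≤ j := Nat.cast_nonneg j
  have hh0 : (0 : ℝ) ≤ h := Nat.cast_nonneg h
  have hn0 : (0 : ℝ) ≤ n := Nat.cast_nonneg n
  have hK0 : (0 : ℝ) ≤ 2 * 8 ^ (j + 1) * (j + 1).factorial := by positivity
  have hjp : 0 ≤ j * p := by positivity
  have hhp : 0 ≤ h * p := by positivity
  have hnp0 : 0 ≤ n * p := by positivity
  have hp1 : p ≤ 1 := by linarith
  have hnp1 : n * p ≤ n := mul_le_of_le_one_right hn0 hp1
  have hjn : j + 1 ≤ n := by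
    have : ((j + 1 : ℕ) : ℝ) ≤ n := by push_cast; linarith
    exact_mod_cast this
  set a : ℝ := 9 * j + 11 with ha_def
  have hap : 2 * (a * p) ≤ 1 := by rw [ha_def]; linarith
  have hdeg := degree_uncovered Cov hp.le H G0 hH hG0 ha hc
  have hapn : 2 * (a * p * (n * p)) ≤ n * p := by
    have := mul_le_mul_of_nonneg_right hap hnp0
    linarith
  have hL0' := mem_shadow_iff_uncovered Cov H G0 L0 hG0 hL0 fun f hf hcov => by
    have h1 := (abs_le.1 (hdeg f hf hcov)).1
    have : (0 : ℝ) < (G0.filter fun e => f ⊆ e).card := by linarith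
    exact_mod_cast this
  have hcovle := card_covered_le Cov (by linarith) hb hp.le
  have hN : L0.card + (((univ : Finset (Fin n)).powersetCard (j + 1)).filter Cov).card =
      n.choose (j + 1) := by
    have h1 : L0 = ((univ : Finset (Fin n)).powersetCard (j + 1)).filter fun f => ¬ Cov f := by
      ext f
      simp [hL0', mem_powersetCard]
    rw [h1, add_comm, card_filter_add_card_filter_not, card_powersetCard, card_univ,
      Fintype.card_fin]
  have hN' : (L0.card : ℝ) + (((univ : Finset (Fin n)).powersetCard (j + 1)).filter Cov).card =
      n.choose (j + 1) := by exact_mod_cast hN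
  set N : ℝ := (n.choose (j + 1) : ℝ) with hNdef
  set L : ℝ := (L0.card : ℝ) with hLdef
  have hNpos : 0 < N := by
    rw [hNdef]
    exact_mod_cast Nat.choose_pos hjn
  have hLN : L ≤ N := by
    rw [← hN']
    exact le_add_of_nonneg_right (Nat.cast_nonneg _)
  have hLge : (1 - 16 * p) * N ≤ L := by linarith
  have h16 : 32 * p ≤ 1 := by linarith
  have hLhalf : N ≤ 2 * L := by
    have := mul_le_mul_of_nonneg_right h16 hNpos.le
    linarith
  have hLpos : 0 < L := by linarith
  have hsumdeg := sum_degree_facets G0 L0 (fun e he => hH e ((hG0 e).1 he).1) hL0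
  have hD0L : D0 * L = ((j : ℝ) + 2) * G0.card := by
    rw [hD0, div_mul_cancel₀ _ hLpos.ne']
  have hsum' : D0 * L = ∑ f ∈ L0, ((G0.filter fun e => f ⊆ e).card : ℝ) := by
    rw [hD0L]
    exact_mod_cast hsumdeg.symm
  have hdegL : ∀ f ∈ L0, |((G0.filter fun e => f ⊆ e).card : ℝ) - n * p| ≤ a * p * (n * p) :=
    fun f hf => hdeg f ((hL0' f).1 hf).1 ((hL0' f).1 hf).2
  have hDabs : |D0 - n * p| ≤ a * p * (n * p) := by
    have h1 : (D0 - n * p) * L = ∑ f ∈ L0, (((G0.filter fun e => f ⊆ e).card : ℝ) - n * p) := by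
      rw [sum_sub_distrib, ← hsum', sum_const, nsmul_eq_mul]
      ring
    have h2 : |(D0 - n * p) * L| ≤ L * (a * p * (n * p)) := by
      rw [h1]
      refine (abs_sum_le_sum_abs _ _).trans ((sum_le_card_nsmul _ _ _ hdegL).trans ?_)
      rw [nsmul_eq_mul]
    rw [abs_mul, abs_of_pos hLpos, mul_comm] at h2
    exact le_of_mul_le_mul_left h2 hLpos
  have hDl := (abs_le.1 hDabs).1
  have hDu := (abs_le.1 hDabs).2
  have hCp : 0 ≤ C * p := mul_nonneg (by linarith) hp.le
  refine ⟨?_, fun f hf => ?_, ?_, ?_, ?_, ?_⟩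
  · have hch : (n.choose (j + 2) : ℝ) * (j + 2) = N * (n - (j + 1)) := by
      have h := Nat.choose_succ_right_eq n (j + 1)
      have hc : ((n - (j + 1) : ℕ) : ℝ) = n - (j + 1) := by
        rw [Nat.cast_sub hjn]
        push_cast
        ring
      rw [hNdef, ← hc]
      exact_mod_cast h
    set K : ℝ := (n.choose (j + 2) : ℝ) with hK
    have hk0 : (0 : ℝ) < j + 2 := by linarith
    set X : ℝ := N * (n - (j + 1)) * p with hX
    have hgap : ((j : ℝ) + 1) ≤ p * (n - (j + 1)) := by
      have : p * (j + 1) ≤ 1 * (j + 1 : ℝ) := by gcongr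
      linarith
    have hnX : n * p * N ≤ X + p * X := by
      have h1 : ((j : ℝ) + 1) * (p * N) ≤ p * (n - (j + 1)) * (p * N) := by gcongr
      rw [hX]
      linarith
    have hX0 : 0 ≤ X := by
      have h0 : (0 : ℝ) ≤ n - (j + 1) := by
        have : ((j + 1 : ℕ) : ℝ) ≤ n := by exact_mod_cast hjn
        push_cast at this
        linarith
      positivity
    have hpX : p * X ≤ X := mul_le_of_le_one_left hX0 hp1
    have hXn : X ≤ n * p * N := by
      have : 0 ≤ (j + 1) * (p * N) := by positivity
      rw [hX]
      linarith
    have ha0 : 0 ≤ a := by rw [ha_def]; linarith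
    have hn2X : n * p * N ≤ 2 * X := by linarith
    have happ : a * p * (n * p * N) ≤ a * p * (2 * X) :=
      mul_le_mul_of_nonneg_left hn2X (by positivity)
    have hup : D0 * L ≤ X + (2 * a + 1) * (p * X) := by
      have h1 : D0 * L ≤ (n * p + a * p * (n * p)) * N := by
        have h0 : 0 ≤ n * p + a * p * (n * p) := by positivity
        gcongr
        linarith
      linarith
    have hlo : X - (2 * a + 32) * (p * X) ≤ D0 * L := by
      have h1 : (n * p - a * p * (n * p)) * ((1 - 16 * p) * N) ≤ D0 * L := by
        have h2 : 0 ≤ (1 - 16 * p) * N := mul_nonneg (by linarith) hNpos.le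
        have h3 : 0 ≤ D0 := by linarith
        gcongr
        linarith
      have h4 : 0 ≤ a * p * (n * p) * (16 * p * N) := by positivity
      have h5 : 16 * p * (n * p * N) ≤ 16 * p * (2 * X) :=
        mul_le_mul_of_nonneg_left hn2X (by positivity)
      linarith
    have hC' : (2 * a + 32) * (p * X) ≤ C * (p * X) := by
      have : 0 ≤ p * X := by positivity
      gcongr
      rw [ha_def]
      linarith
    have hpX0 : 0 ≤ p * X := by positivity
    have hXK : X = K * p * (j + 2) := by
      rw [hX, ← hch]
      ring
    have habs : |((G0.card : ℝ) - K * p) * (j + 2)| ≤ C * p * (K * p) * (j + 2) := by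
      have e1 : ((G0.card : ℝ) - K * p) * (j + 2) = D0 * L - X := by
        rw [hD0L, hXK]
        ring
      have e2 : C * p * (K * p) * (j + 2) = C * (p * X) := by
        rw [hXK]
        ring
      rw [e1, e2, abs_le]
      constructor <;> linarith
    rw [abs_mul, abs_of_pos hk0] at habs
    exact le_of_mul_le_mul_right habs hk0
  · have h1 := abs_le.1 (hdegL f hf)
    have h2 : 2 * (a * p * (n * p)) ≤ C * p * D0 := by
      have h3 : n * p ≤ 2 * D0 := by linarith
      have h4 : 4 * a * p * D0 ≤ C * p * D0 := by
        have : 0 ≤ D0 := by linarith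
        gcongr
        rw [ha_def]
        linarith
      have h5 : 2 * (a * p * (n * p)) ≤ 2 * (a * p * (2 * D0)) := by
        have : 0 ≤ a := by rw [ha_def]; linarith
        gcongr
      linarith
    rw [abs_le]
    constructor <;> linarith [h1.1, h1.2]
  · have h1 : 16 * p * N ≤ C * p * N := by
      gcongr
      linarith
    rw [abs_le]
    constructor <;> linarith
  · refine hDabs.trans ?_
    gcongr
    rw [ha_def]
    linarith
  · refine isTypical_of_uncovered Cov hp.le (by linarith) (by linarith) ?_ (by linarith) L0 hL0' hb
      ((div_le_one hNpos).2 hLN) ((le_div_iff₀ hNpos).2 hLge)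
    have : 32 * h * p ≤ C * p := by
      gcongr
      linarith
    linarith
  · refine affineBounded_of_card ?_ hF L0 (fun f hf => ((hL0' f).1 hf).1) hLhalf (by linarith)
      π hπ ord hord
    have : ((2 * j : ℕ) : ℝ) ≤ n := by push_cast; linarith
    exact_mod_cast this

end Conclusions

section Template

variable {n j : ℕ} {F : Type*} [Field F]

/-- `f` lies in a zero-sum edge of `H`. -/
def TemplateCovered (H : Finset (Finset (Fin n))) (π : Fin n → F) (f : Finset (Fin n)) : Prop :=
  ∃ e ∈ H, ∑ v ∈ e, π v = 0 ∧ f ⊆ e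

theorem TemplateCovered.exists_partner {H : Finset (Finset (Fin n))} {π : Fin n → F}
    (hH : H ⊆ allK n (j + 2)) {S : Finset (Fin n)} (hS : S.card = j) {v : Fin n} (hv : v ∉ S)
    (h : TemplateCovered H π (insert v S)) :
    ∃ u, u ∉ S ∧ u ≠ v ∧ insert u (insert v S) ∈ H ∧ π v + π u + ∑ w ∈ S, π w = 0 := by
  obtain ⟨e, he, hsum, hsub⟩ := h
  have hec : e.card = j + 2 := (mem_powersetCard.1 (hH he)).2
  have hvc : (insert v S).card = j + 1 := by rw [card_insert_of_notMem hv, hS]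
  obtain ⟨u, hu, rfl⟩ := (Finset.covBy_iff_exists_insert (s := insert v S) (t := e)).1
    ((Finset.covBy_iff_card_sdiff_eq_one).2 ⟨hsub, by rw [card_sdiff_of_subset hsub]; omega⟩)
  rw [sum_insert hu, sum_insert hv] at hsum
  rw [mem_insert, not_or] at hu
  exact ⟨u, hu.2, hu.1, he, by rw [← hsum]; ring⟩

open Classical in
/-- The `R`-ordered pairs outside `X` that complete `S` to a zero-sum set. -/
noncomputable def zeroSumPairs (π : Fin n → F) (R : Fin n → Fin n → Prop)
    (S X : Finset (Fin n)) : Finset (Fin n × Fin n) :=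
  univ.filter fun q => R q.1 q.2 ∧ q.1 ∉ X ∧ q.2 ∉ X ∧ π q.1 + π q.2 + ∑ w ∈ S, π w = 0

theorem mem_zeroSumPairs {π : Fin n → F} {R : Fin n → Fin n → Prop} {S X : Finset (Fin n)}
    {q : Fin n × Fin n} : q ∈ zeroSumPairs π R S X ↔
      R q.1 q.2 ∧ q.1 ∉ X ∧ q.2 ∉ X ∧ π q.1 + π q.2 + ∑ w ∈ S, π w = 0 := by
  simp [zeroSumPairs]

theorem zeroSumPairs_ext {π : Fin n → F} (hπ : Function.Injective π) {R : Fin n → Fin n → Prop}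
    {S X : Finset (Fin n)} {q q' : Fin n × Fin n} (hq : q ∈ zeroSumPairs π R S X)
    (hq' : q' ∈ zeroSumPairs π R S X) (h : q.1 = q'.1) : q = q' := by
  rw [mem_zeroSumPairs] at hq hq'
  refine Prod.ext h (hπ ?_)
  have h1 := hq.2.2.2
  have h2 := hq'.2.2.2
  rw [h] at h1
  linear_combination h1 - h2

theorem card_zeroSumPairs_le {π : Fin n → F} (hπ : Function.Injective π)
    (R : Fin n → Fin n → Prop) (S X : Finset (Fin n)) :
    ((zeroSumPairs π R S X).card : ℝ) ≤ n := by
  have := card_le_card_of_injOn (s := zeroSumPairs π R S X) (t := (univ : Finset (Fin n)))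
    Prod.fst (fun _ _ => mem_univ _) fun q hq q' hq' h => zeroSumPairs_ext hπ hq hq' h
  rw [card_univ, Fintype.card_fin] at this
  exact_mod_cast this

theorem insert_insert_ne_of_ne {π : Fin n → F} (hπ : Function.Injective π)
    {R : Fin n → Fin n → Prop} (hR : ∀ a b, R a b → ¬ R b a) {S X : Finset (Fin n)} (hSX : S ⊆ X)
    {q q' : Fin n × Fin n} (hq : q ∈ zeroSumPairs π R S X) (hq' : q' ∈ zeroSumPairs π R S X)
    (hne : q ≠ q') : insert q.2 (insert q.1 S) ≠ insert q'.2 (insert q'.1 S) := by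
  intro h
  refine hne (zeroSumPairs_ext hπ hq hq' ?_)
  rw [mem_zeroSumPairs] at hq hq'
  have h1 : q.1 ∈ insert q'.2 (insert q'.1 S) := h ▸ by simp
  have h2 : q.2 ∈ insert q'.2 (insert q'.1 S) := h ▸ by simp
  have hs1 : q.1 ∉ S := fun hh => hq.2.1 (hSX hh)
  have hs2 : q.2 ∉ S := fun hh => hq.2.2.1 (hSX hh)
  simp only [mem_insert, hs1, hs2, or_false] at h1 h2
  rcases h1 with h1 | h1
  · rcases h2 with h2 | h2
    · exact absurd hq.1 (by rw [h1, h2]; exact fun hh => hR _ _ hh hh)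
    · exact absurd hq.1 (by rw [h1, h2]; exact hR _ _ hq'.1)
  · exact h1

theorem insert_insert_mem_allK {S : Finset (Fin n)} (hS : S.card = j) {u v : Fin n} (hv : v ∉ S)
    (hu : u ∉ S) (huv : u ≠ v) : insert u (insert v S) ∈ allK n (j + 2) := by
  refine mem_powersetCard.2 ⟨subset_univ _, ?_⟩
  rw [card_insert_of_notMem (by simp [huv, hu]), card_insert_of_notMem hv, hS]

theorem subsetProb_zeroSumPairs {π : Fin n → F} (hπ : Function.Injective π)
    {p : ℝ} (hp0 : 0 ≤ p) (hp1 : p ≤ 1) {R : Fin n → Fin n → Prop} (hR : ∀ a b, R a b → ¬ R b a)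
    {S : Finset (Fin n)} (hS : S.card = j) :
    subsetProb (allK n (j + 2)) p (fun H => 4 * (n * p ^ 1) <
      ((zeroSumPairs π R S S).filter fun q => {insert q.2 (insert q.1 S)} ⊆ H).card) ≤
      Real.exp (-(n * p ^ 1)) := by
  refine subsetProb_upper_tail _ hp0 hp1 _ _ 1 (fun q hq => ?_) (fun _ _ => card_singleton _)
    (fun q hq q' hq' hne => ?_) (card_zeroSumPairs_le hπ R S S)
  · rw [mem_zeroSumPairs] at hq
    exact singleton_subset_iff.2 (insert_insert_mem_allK hS hq.2.1 hq.2.2.1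
      fun h => hR _ _ hq.1 (by simpa [h] using hq.1))
  · rw [Function.onFun, disjoint_singleton]
    exact insert_insert_ne_of_ne hπ hR subset_rfl hq hq' hne

theorem subsetProb_zeroSumPairs_extend {π : Fin n → F} (hπ : Function.Injective π)
    {p : ℝ} (hp0 : 0 ≤ p) (hp1 : p ≤ 1) {R : Fin n → Fin n → Prop} (hR : ∀ a b, R a b → ¬ R b a)
    {S : Finset (Fin n)} (hS : S.card = j) {x : Fin n} (hx : x ∉ S) :
    subsetProb (allK n (j + 2)) p (fun H => 4 * (n * p ^ 2) <
      ((zeroSumPairs π R S (insert x S)).filter fun q =>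
        {insert q.2 (insert q.1 S), insert q.1 (insert x S)} ⊆ H).card) ≤
      Real.exp (-(n * p ^ 2)) := by
  have hxne (q q' : Fin n × Fin n) (hq : q ∈ zeroSumPairs π R S (insert x S)) :
      insert q.2 (insert q.1 S) ≠ insert q'.1 (insert x S) := by
    rw [mem_zeroSumPairs, mem_insert, mem_insert, not_or, not_or] at hq
    intro h
    have : x ∈ insert q.2 (insert q.1 S) := h ▸ by simp
    simp only [mem_insert, hx, or_false] at this
    rcases this with h | h
    · exact hq.2.2.1.1 h.symm
    · exact hq.2.1.1 h.symm
  refine subsetProb_upper_tail _ hp0 hp1 _ _ 2 (fun q hq => ?_)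
    (fun q hq => card_pair (hxne q q hq))
    (fun q hq q' hq' hne => ?_) (card_zeroSumPairs_le hπ R S _)
  · rw [mem_zeroSumPairs, mem_insert, mem_insert, not_or, not_or] at hq
    rw [insert_subset_iff, singleton_subset_iff]
    exact ⟨insert_insert_mem_allK hS hq.2.1.2 hq.2.2.1.2
      fun h => hR _ _ hq.1 (by simpa [h] using hq.1),
      insert_insert_mem_allK hS hx hq.2.1.2 hq.2.1.1⟩
  · have h1 := insert_insert_ne_of_ne hπ hR (subset_insert x S) hq hq' hne
    have h2 : insert q.1 (insert x S) ≠ insert q'.1 (insert x S) := by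
      intro h
      refine hne (zeroSumPairs_ext hπ hq hq' ?_)
      have hq1 := (mem_zeroSumPairs.1 hq).2.1
      have : q.1 ∈ insert q'.1 (insert x S) := h ▸ mem_insert_self _ _
      exact (mem_insert.1 this).resolve_right hq1
    rw [Function.onFun, disjoint_left]
    intro e he he'
    simp only [mem_insert, mem_singleton] at he he'
    rcases he with rfl | rfl <;> rcases he' with h | h
    · exact h1 h
    · exact hxne q q' hq h
    · exact hxne q' q hq' h.symm
    · exact h2 h

open Classical in
theorem subsetProb_covered {π : Fin n → F} (hπ : Function.Injective π)
    {p : ℝ} (hp0 : 0 ≤ p) (hp1 : p ≤ 1) {S : Finset (Fin n)} (hS : S.card = j) :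
    subsetProb (allK n (j + 2)) p (fun H => 8 * p * n <
      ((univ.filter fun v => v ∉ S ∧ TemplateCovered H π (insert v S)).card : ℝ)) ≤
      2 * Real.exp (-(n * p ^ 1)) := by
  have h1 := subsetProb_zeroSumPairs hπ hp0 hp1 (R := (· < ·)) (fun _ _ h => h.asymm) hS
  have h2 := subsetProb_zeroSumPairs hπ hp0 hp1 (R := (· > ·)) (fun _ _ h => lt_asymm h) hS
  rw [two_mul]
  refine (subsetProb_mono _ hp0 hp1 fun H hH hlt => ?_).trans
    ((subsetProb_or_le _ hp0 hp1 _ _).trans (add_le_add h1 h2))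
  by_contra hcon
  rw [not_or, not_lt, not_lt] at hcon
  have hsub : (univ.filter fun v => v ∉ S ∧ TemplateCovered H π (insert v S)) ⊆
      (((zeroSumPairs π (· < ·) S S).filter
        fun q => {insert q.2 (insert q.1 S)} ⊆ H).image Prod.fst) ∪
      (((zeroSumPairs π (· > ·) S S).filter
        fun q => {insert q.2 (insert q.1 S)} ⊆ H).image Prod.fst) := by
    intro v hv
    obtain ⟨-, hvS, hcov⟩ := mem_filter.1 hv
    obtain ⟨u, huS, huv, huH, hsum⟩ := hcov.exists_partner hH hS hvS
    rw [mem_union, mem_image, mem_image]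
    rcases lt_or_gt_of_ne huv.symm with hlt | hlt
    · exact Or.inl ⟨(v, u), mem_filter.2 ⟨mem_zeroSumPairs.2 ⟨hlt, hvS, huS, hsum⟩,
        singleton_subset_iff.2 huH⟩, rfl⟩
    · exact Or.inr ⟨(v, u), mem_filter.2 ⟨mem_zeroSumPairs.2 ⟨hlt, hvS, huS, hsum⟩,
        singleton_subset_iff.2 huH⟩, rfl⟩
  have hcard := (card_le_card hsub).trans ((card_union_le _ _).trans
    (add_le_add card_image_le card_image_le))
  have hcard' := (Nat.cast_le (α := ℝ)).2 hcard
  push_cast at hcard'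
  linarith [hcon.1, hcon.2]

open Classical in
theorem subsetProb_covered_extend {π : Fin n → F} (hπ : Function.Injective π)
    {p : ℝ} (hp0 : 0 ≤ p) (hp1 : p ≤ 1) (hnp : 1 ≤ n * p ^ 2) {S : Finset (Fin n)}
    (hS : S.card = j) {x : Fin n} (hx : x ∉ S) :
    subsetProb (allK n (j + 2)) p (fun H => 9 * p * (n * p) <
      ((univ.filter fun v => v ∉ insert x S ∧ insert v (insert x S) ∈ H ∧
        TemplateCovered H π (insert v S)).card : ℝ)) ≤
      2 * Real.exp (-(n * p ^ 2)) := by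
  have h1 := subsetProb_zeroSumPairs_extend hπ hp0 hp1 (R := (· < ·)) (fun _ _ h => h.asymm) hS hx
  have h2 := subsetProb_zeroSumPairs_extend hπ hp0 hp1 (R := (· > ·))
    (fun _ _ h => lt_asymm h) hS hx
  rw [two_mul]
  refine (subsetProb_mono _ hp0 hp1 fun H hH hlt => ?_).trans
    ((subsetProb_or_le _ hp0 hp1 _ _).trans (add_le_add h1 h2))
  by_contra hcon
  rw [not_or, not_lt, not_lt] at hcon
  have hsub : (univ.filter fun v => v ∉ insert x S ∧ insert v (insert x S) ∈ H ∧
        TemplateCovered H π (insert v S)) ⊆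
      (univ.filter fun v => π v + π x + ∑ w ∈ S, π w = 0) ∪
      ((((zeroSumPairs π (· < ·) S (insert x S)).filter fun q =>
        {insert q.2 (insert q.1 S), insert q.1 (insert x S)} ⊆ H).image Prod.fst) ∪
      (((zeroSumPairs π (· > ·) S (insert x S)).filter fun q =>
        {insert q.2 (insert q.1 S), insert q.1 (insert x S)} ⊆ H).image Prod.fst)) := by
    intro v hv
    obtain ⟨-, hvX, hvH, hcov⟩ := mem_filter.1 hv
    have hvS : v ∉ S := fun h => hvX (mem_insert_of_mem h)
    obtain ⟨u, huS, huv, huH, hsum⟩ := hcov.exists_partner hH hS hvS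
    rw [mem_union, mem_union, mem_image, mem_image]
    by_cases hux : u = x
    · exact Or.inl (mem_filter.2 ⟨mem_univ _, hux ▸ hsum⟩)
    have huX : u ∉ insert x S := by simp [hux, huS]
    have hB : {insert u (insert v S), insert v (insert x S)} ⊆ H :=
      insert_subset_iff.2 ⟨huH, singleton_subset_iff.2 hvH⟩
    rcases lt_or_gt_of_ne huv.symm with hlt | hlt
    · exact Or.inr (Or.inl ⟨(v, u), mem_filter.2
        ⟨mem_zeroSumPairs.2 ⟨hlt, hvX, huX, hsum⟩, hB⟩, rfl⟩)
    · exact Or.inr (Or.inr ⟨(v, u), mem_filter.2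
        ⟨mem_zeroSumPairs.2 ⟨hlt, hvX, huX, hsum⟩, hB⟩, rfl⟩)
  have hone : (univ.filter fun v => π v + π x + ∑ w ∈ S, π w = 0).card ≤ 1 := by
    refine card_le_one.2 fun a ha b hb => hπ ?_
    have h1 := (mem_filter.1 ha).2
    have h2 := (mem_filter.1 hb).2
    linear_combination h1 - h2
  have hcard := (card_le_card hsub).trans ((card_union_le _ _).trans
    (add_le_add hone ((card_union_le _ _).trans (add_le_add card_image_le card_image_le))))
  have hcard' := (Nat.cast_le (α := ℝ)).2 hcard
  push_cast at hcard'
  nlinarith [hcon.1, hcon.2]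

theorem subsetProb_degree {p : ℝ} (hp0 : 0 ≤ p) (hp1 : p ≤ 1) (hnp : 2 * ((j : ℝ) + 1) ≤ n * p)
    {f : Finset (Fin n)} (hf : f.card = j + 1) :
    subsetProb (allK n (j + 2)) p (fun H => 2 * p * (n * p) <
      |((H.filter fun e => f ⊆ e).card : ℝ) - n * p|) ≤
      2 * Real.exp (-(n * p ^ 3 / 8)) := by
  have hn0 : (0 : ℝ) ≤ n := Nat.cast_nonneg n
  have hnp1 : n * p ≤ n := mul_le_of_le_one_right hn0 hp1
  have hV : ((fᶜ).card : ℝ) = n - (j + 1) := by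
    have h := card_add_card_compl f
    rw [Fintype.card_fin, hf] at h
    have h' : ((j : ℝ) + 1) + (fᶜ).card = n := by exact_mod_cast h
    linarith
  have hinj : ∀ v ∈ fᶜ, ∀ w ∈ fᶜ, insert v f = insert w f → v = w := by
    intro v hv w _ h
    have : v ∈ insert w f := h ▸ mem_insert_self v f
    exact (mem_insert.1 this).resolve_right (mem_compl.1 hv)
  have hdev := subsetProb_deviation (allK n (j + 2)) hp0 hp1 fᶜ (fun v => {insert v f})
    (fun v hv => singleton_subset_iff.2 (mem_powersetCard.2 ⟨subset_univ _, by
      rw [card_insert_of_notMem (mem_compl.1 hv), hf]⟩)) (fun _ _ => card_singleton _)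
    (fun v hv w hw hne => by
      rw [Function.onFun, disjoint_singleton]
      exact fun h => hne (hinj v hv w hw h))
  refine (subsetProb_mono _ hp0 hp1 fun H hH hlt => ?_).trans (hdev.trans ?_)
  · have hcount : (H.filter fun e => f ⊆ e).card =
        (fᶜ.filter fun v => {insert v f} ⊆ H).card := by
      symm
      refine card_bij (fun v _ => insert v f) (fun v hv => ?_) (fun v hv w hw h => ?_)
        (fun e he => ?_)
      · exact mem_filter.2 ⟨singleton_subset_iff.1 (mem_filter.1 hv).2, subset_insert _ _⟩
      · exact hinj v (mem_filter.1 hv).1 w (mem_filter.1 hw).1 h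
      · obtain ⟨heH, hfe⟩ := mem_filter.1 he
        have hec : e.card = j + 2 := (mem_powersetCard.1 (hH heH)).2
        obtain ⟨v, hv, rfl⟩ := (Finset.covBy_iff_exists_insert (s := f) (t := e)).1
          ((Finset.covBy_iff_card_sdiff_eq_one).2 ⟨hfe, by rw [card_sdiff_of_subset hfe]; omega⟩)
        exact ⟨v, mem_filter.2 ⟨mem_compl.2 hv, singleton_subset_iff.2 heH⟩, rfl⟩
    rw [hcount] at hlt
    set Y : ℝ := ((fᶜ.filter fun v => {insert v f} ⊆ H).card : ℝ)
    rw [hV]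
    have h1 : |Y - n * p| ≤ |Y - (n - (j + 1)) * p| + (j + 1) * p := by
      have h2 := abs_sub_le Y ((n - (j + 1)) * p) (n * p)
      have h3 : |((n : ℝ) - (j + 1)) * p - n * p| = (j + 1) * p := by
        rw [show ((n : ℝ) - (j + 1)) * p - n * p = -((j + 1) * p) by ring, abs_neg,
          abs_of_nonneg (by positivity)]
      linarith
    have h4 : ((j : ℝ) + 1) * p ≤ n * p * p := by
      gcongr
      linarith [(Nat.cast_nonneg j : (0 : ℝ) ≤ j)]
    have h5 : 0 ≤ p * ((j + 1) * p) := by positivity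
    linarith
  · refine mul_le_mul_of_nonneg_left (Real.exp_le_exp.2 ?_) zero_le_two
    rw [hV]
    have : 0 ≤ ((n : ℝ) - 2 * (j + 1)) * p ^ 3 := mul_nonneg (by linarith) (by positivity)
    linarith

end Template

section Assembly

open Filter Topology

open Classical in
/-- The local estimates fail with exponentially small probability. -/
theorem subsetProb_local_failure {n j : ℕ} {F : Type*} [Field F] {π : Fin n → F}
    (hπ : Function.Injective π) {p : ℝ} (hp0 : 0 ≤ p) (hp1 : p ≤ 1)
    (hnp : 4 * ((j : ℝ) + 2) ≤ n * p ^ 2) :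
    subsetProb (allK n (j + 2)) p (fun H =>
      (∃ f ∈ (univ : Finset (Fin n)).powersetCard (j + 1), 2 * p * (n * p) <
        |((H.filter fun e => f ⊆ e).card : ℝ) - n * p|) ∨
      (∃ S ∈ (univ : Finset (Fin n)).powersetCard j, 8 * p * n <
        ((univ.filter fun v => v ∉ S ∧ TemplateCovered H π (insert v S)).card : ℝ)) ∨
      (∃ q ∈ ((univ : Finset (Fin n)).powersetCard j ×ˢ (univ : Finset (Fin n))).filter
          fun q => q.2 ∉ q.1, 9 * p * (n * p) <
        ((univ.filter fun v => v ∉ insert q.2 q.1 ∧ insert v (insert q.2 q.1) ∈ H ∧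
          TemplateCovered H π (insert v q.1)).card : ℝ))) ≤
      6 * (n : ℝ) ^ (j + 1) * Real.exp (-(n * p ^ 3 / 8)) := by
  have hj0 : (0 : ℝ) ≤ j := Nat.cast_nonneg j
  have hn0 : (0 : ℝ) ≤ n := Nat.cast_nonneg n
  have h21 : (n : ℝ) * p ^ 2 ≤ n * p := by
    have : p ^ 2 ≤ p := pow_le_of_le_one hp0 hp1 two_ne_zero
    gcongr
  have h31 : (n : ℝ) * p ^ 3 ≤ n * p ^ 2 := by
    have : p ^ 3 ≤ p ^ 2 := pow_le_pow_of_le_one hp0 hp1 (by norm_num)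
    gcongr
  have h3 : 0 ≤ (n : ℝ) * p ^ 3 := by positivity
  set b := 2 * Real.exp (-(n * p ^ 3 / 8)) with hb
  have ha := subsetProb_exists_le (allK n (j + 2)) hp0 hp1
    ((univ : Finset (Fin n)).powersetCard (j + 1))
    (fun f H => 2 * p * (n * p) < |((H.filter fun e => f ⊆ e).card : ℝ) - n * p|) (b := b)
    fun f hf => subsetProb_degree hp0 hp1 (by linarith) (mem_powersetCard.1 hf).2
  have hbb := subsetProb_exists_le (allK n (j + 2)) hp0 hp1
    ((univ : Finset (Fin n)).powersetCard j)
    (fun S H => 8 * p * n <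
      ((univ.filter fun v => v ∉ S ∧ TemplateCovered H π (insert v S)).card : ℝ)) (b := b)
    fun S hS => (subsetProb_covered hπ hp0 hp1 (mem_powersetCard.1 hS).2).trans
      (mul_le_mul_of_nonneg_left (Real.exp_le_exp.2 (by rw [pow_one]; linarith)) zero_le_two)
  have hc := subsetProb_exists_le (allK n (j + 2)) hp0 hp1
    (((univ : Finset (Fin n)).powersetCard j ×ˢ (univ : Finset (Fin n))).filter
          fun q => q.2 ∉ q.1)
    (fun q H => 9 * p * (n * p) <
        ((univ.filter fun v => v ∉ insert q.2 q.1 ∧ insert v (insert q.2 q.1) ∈ H ∧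
          TemplateCovered H π (insert v q.1)).card : ℝ)) (b := b)
    fun q hq => by
      obtain ⟨hq1, hq2⟩ := mem_filter.1 hq
      exact (subsetProb_covered_extend hπ hp0 hp1 (by linarith)
        (mem_powersetCard.1 (mem_product.1 hq1).1).2 hq2).trans
        (mul_le_mul_of_nonneg_left (Real.exp_le_exp.2 (by linarith)) zero_le_two)
  have hb0 : 0 ≤ b := by positivity
  have hnpos : 1 ≤ n := by
    rcases Nat.eq_zero_or_pos n with h | h
    · subst h
      norm_num at hnp
      linarith
    · exact h
  have ca : (((univ : Finset (Fin n)).powersetCard (j + 1)).card : ℝ) ≤ (n : ℝ) ^ (j + 1) := by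
    rw [card_powersetCard, card_univ, Fintype.card_fin]
    exact_mod_cast Nat.choose_le_pow n (j + 1)
  have cbn : ((univ : Finset (Fin n)).powersetCard j).card ≤ n ^ j := by
    rw [card_powersetCard, card_univ, Fintype.card_fin]
    exact Nat.choose_le_pow n j
  have cb : (((univ : Finset (Fin n)).powersetCard j).card : ℝ) ≤ (n : ℝ) ^ (j + 1) := by
    exact_mod_cast cbn.trans (Nat.pow_le_pow_right hnpos (Nat.le_succ j))
  have cc : ((((univ : Finset (Fin n)).powersetCard j ×ˢ (univ : Finset (Fin n))).filter
      fun q => q.2 ∉ q.1).card : ℝ) ≤ (n : ℝ) ^ (j + 1) := by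
    have h1 := card_filter_le ((univ : Finset (Fin n)).powersetCard j ×ˢ (univ : Finset (Fin n)))
      fun q => q.2 ∉ q.1
    rw [card_product, card_univ, Fintype.card_fin] at h1
    exact_mod_cast h1.trans ((Nat.mul_le_mul_right n cbn).trans (pow_succ n j).ge)
  refine (subsetProb_or_le _ hp0 hp1 _ _).trans ?_
  have hor := subsetProb_or_le (allK n (j + 2)) hp0 hp1
    (fun H => ∃ S ∈ (univ : Finset (Fin n)).powersetCard j, 8 * p * n <
        ((univ.filter fun v => v ∉ S ∧ TemplateCovered H π (insert v S)).card : ℝ))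
    (fun H => ∃ q ∈ ((univ : Finset (Fin n)).powersetCard j ×ˢ (univ : Finset (Fin n))).filter
          fun q => q.2 ∉ q.1, 9 * p * (n * p) <
        ((univ.filter fun v => v ∉ insert q.2 q.1 ∧ insert v (insert q.2 q.1) ∈ H ∧
          TemplateCovered H π (insert v q.1)).card : ℝ))
  have m1 := mul_le_mul_of_nonneg_right ca hb0
  have m2 := mul_le_mul_of_nonneg_right cb hb0
  have m3 := mul_le_mul_of_nonneg_right cc hb0
  have hfin : 6 * (n : ℝ) ^ (j + 1) * Real.exp (-(n * p ^ 3 / 8)) =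
      (n : ℝ) ^ (j + 1) * b + ((n : ℝ) ^ (j + 1) * b + (n : ℝ) ^ (j + 1) * b) := by
    rw [hb]
    ring
  linarith

/-- A bound for every fixed injection gives the same bound for a random injection. -/
theorem le_hypInjProb {n k : ℕ} {F : Type*} [Fintype F] [DecidableEq F] [Zero F] {p b : ℝ}
    (hF : n + 1 ≤ Fintype.card F) (E : Finset (Finset (Fin n)) → (Fin n → F) → Prop)
    (h : ∀ π : Fin n → F, Function.Injective π → b ≤ subsetProb (allK n k) p fun H => E H π) :
    b ≤ hypInjProb n k F p E := by
  have hne : ((univ : Finset (Fin n → F)).filter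
      fun π => Function.Injective π ∧ ∀ v, π v ≠ 0).Nonempty := by
    have hc : Fintype.card (Fin n) ≤ Fintype.card {x : F // x ≠ 0} := by
      rw [Fintype.card_fin, Fintype.card_subtype_compl, Fintype.card_subtype_eq]
      omega
    obtain ⟨g⟩ := Function.Embedding.nonempty_of_card_le hc
    exact ⟨fun v => (g v : F), mem_filter.2 ⟨mem_univ _,
      Subtype.val_injective.comp g.injective, fun v => (g v).2⟩⟩
  have hpos : (0 : ℝ) < ((univ : Finset (Fin n → F)).filter
      fun π => Function.Injective π ∧ ∀ v, π v ≠ 0).card := by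
    exact_mod_cast hne.card_pos
  rw [hypInjProb, le_div_iff₀ hpos, mul_comm, ← nsmul_eq_mul]
  exact card_nsmul_le_sum _ _ _ fun π hπ => h π (mem_filter.1 hπ).2.1

theorem eventually_tail_le {ε : ℝ} (hε : 3 * ε < 1) (c : ℝ) (j : ℕ) :
    ∀ᶠ n : ℕ in atTop, 6 * (n : ℝ) ^ (j + 1) *
      Real.exp (-(n * ((n : ℝ) ^ (-ε)) ^ 3 / 8)) ≤ (n : ℝ) ^ (-c) := by
  have hδ : 0 < 1 - 3 * ε := by linarith
  have hy : Tendsto (fun n : ℕ => (n : ℝ) ^ (1 - 3 * ε)) atTop atTop :=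
    (tendsto_rpow_atTop hδ).comp tendsto_natCast_atTop_atTop
  have hlim := (tendsto_rpow_mul_exp_neg_mul_atTop_nhds_zero
    ((j + 1 + c) / (1 - 3 * ε)) (1 / 8) (by norm_num)).comp hy
  filter_upwards [hlim.eventually (gt_mem_nhds (show (0 : ℝ) < 1 / 6 by norm_num)),
    eventually_ge_atTop 1] with n hn hn1
  have hnpos : (0 : ℝ) < n := by exact_mod_cast hn1
  have e1 : (n : ℝ) * ((n : ℝ) ^ (-ε)) ^ 3 = (n : ℝ) ^ (1 - 3 * ε) := by
    rw [← Real.rpow_natCast, ← Real.rpow_mul hnpos.le, ← Real.rpow_one_add' hnpos.le]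
    · congr 1
      push_cast
      ring
    · push_cast
      linarith
  have e2 : ((n : ℝ) ^ (1 - 3 * ε)) ^ ((j + 1 + c) / (1 - 3 * ε)) =
      (n : ℝ) ^ (j + 1) * (n : ℝ) ^ c := by
    rw [← Real.rpow_mul hnpos.le, mul_div_cancel₀ _ hδ.ne', Real.rpow_add hnpos]
    congr 1
    exact_mod_cast Real.rpow_natCast (n : ℝ) (j + 1)
  rw [e1]
  rw [Function.comp_apply, e2] at hn
  have hc0 : 0 < (n : ℝ) ^ c := Real.rpow_pos_of_pos hnpos c
  rw [Real.rpow_neg hnpos.le, ← one_div, le_div_iff₀ hc0]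
  have e3 : -(n : ℝ) ^ (1 - 3 * ε) / 8 = -(1 / 8) * (n : ℝ) ^ (1 - 3 * ε) := by ring
  rw [← neg_div, e3]
  linarith

theorem eventually_density {ε : ℝ} (hε0 : 0 < ε) (hε : 3 * ε < 1) (K M : ℝ) :
    ∀ᶠ n : ℕ in atTop, K * (n : ℝ) ^ (-ε) ≤ 1 ∧ M ≤ n * ((n : ℝ) ^ (-ε)) ^ 2 := by
  have hδ : 0 < 1 - 2 * ε := by linarith
  have hy : Tendsto (fun n : ℕ => (n : ℝ) ^ (1 - 2 * ε)) atTop atTop :=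
    (tendsto_rpow_atTop hδ).comp tendsto_natCast_atTop_atTop
  have hp : Tendsto (fun n : ℕ => K * (n : ℝ) ^ (-ε)) atTop (𝓝 (K * 0)) :=
    ((tendsto_rpow_neg_atTop hε0).comp tendsto_natCast_atTop_atTop).const_mul K
  rw [mul_zero] at hp
  filter_upwards [hp.eventually (gt_mem_nhds one_pos), hy.eventually (eventually_ge_atTop M),
    eventually_ge_atTop 1] with n h1 h2 hn1
  have hnpos : (0 : ℝ) < n := by exact_mod_cast hn1
  refine ⟨h1.le, h2.trans_eq ?_⟩
  rw [← Real.rpow_natCast, ← Real.rpow_mul hnpos.le, ← Real.rpow_one_add' hnpos.le]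
  · congr 1
    push_cast
    ring
  · push_cast
    linarith

end Assembly

/-- properties of the template `T`, of
`G₀ = {e ∈ H : e facet-disjoint from T}`, of `L₀ = K_{k-1}(G₀)` and of
`D₀ = k|G₀|/|L₀|`, holding with very high probability. -/
theorem stmt_13 (k : ℕ) (hk : k = 3 ∨ k = 4) (h : ℕ) :
    ∃ ε₀ C : ℝ, 0 < ε₀ ∧ 1 < C ∧
      ∀ ε : ℝ, 0 < ε → ε < ε₀ →
        ∀ c' : ℝ, 0 < c' →
          ∃ n₀ : ℕ, ∀ n : ℕ, n₀ ≤ n →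
            ∀ (m : ℕ) (F : Type) [Field F] [Fintype F] [DecidableEq F],
              ringChar F = 2 → Fintype.card F = 2 ^ m → 2 * n ≤ 2 ^ m → 2 ^ m ≤ 4 * n →
              ∀ ord : Finset (Fin n) → Fin (k - 1) → Fin n,
                (∀ f : Finset (Fin n), f.card = k - 1 →
                    Finset.image (ord f) Finset.univ = f) →
                1 - (n : ℝ) ^ (-c') ≤
                  hypInjProb n k F ((n : ℝ) ^ (-ε)) (fun H π =>
                    let p : ℝ := (n : ℝ) ^ (-ε)
                    let T := H.filter fun e => ∑ v ∈ e, π v = 0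
                    let G0 := H.filter fun e =>
                      ∀ f ⊆ e, f.card = k - 1 → ∀ e' ∈ T, ¬f ⊆ e'
                    let L0 := G0.biUnion fun e => e.powersetCard (k - 1)
                    let D0 : ℝ := k * G0.card / L0.card
                    (|(G0.card : ℝ) - (n.choose k : ℝ) * p| ≤
                        C * p * ((n.choose k : ℝ) * p)) ∧
                    (∀ f ∈ L0,
                      |((G0.filter fun e => f ⊆ e).card : ℝ) - D0| ≤ C * p * D0) ∧
                    (|(L0.card : ℝ) - (n.choose (k - 1) : ℝ)| ≤
                        C * p * (n.choose (k - 1) : ℝ)) ∧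
                    (|D0 - (n : ℝ) * p| ≤ C * p * ((n : ℝ) * p)) ∧
                    IsTypical n k (C * p) h L0 ∧
                    AffineBounded F C
                      ((fun f => π ∘ ord f) '' (L0 : Set (Finset (Fin n))))) := by
  classical
  obtain ⟨j, rfl⟩ : ∃ j, k = j + 2 := ⟨k - 2, by omega⟩
  set C : ℝ := 36 * ((j : ℝ) + 2) + 32 * h + 2 * 8 ^ (j + 1) * (j + 1).factorial with hC
  have hj0 : (0 : ℝ) ≤ j := Nat.cast_nonneg j
  have hh0 : (0 : ℝ) ≤ h := Nat.cast_nonneg h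
  refine ⟨1 / 6, C, by norm_num, ?_, fun ε hε0 hε c' _ => ?_⟩
  · have : (0 : ℝ) ≤ 2 * 8 ^ (j + 1) * (j + 1).factorial := by positivity
    linarith
  obtain ⟨n₀, hn₀⟩ := Filter.eventually_atTop.1 ((eventually_density hε0 (by linarith)
    (36 * ((j : ℝ) + 2) + 32 * h) (4 * ((j : ℝ) + 2))).and
    ((eventually_tail_le (ε := ε) (by linarith) c' j).and (Filter.eventually_ge_atTop 1)))
  refine ⟨n₀, fun n hn m F _ _ _ _ hFm hm1 hm2 ord hord => ?_⟩
  obtain ⟨⟨hsmall, hnp⟩, htail, hn1⟩ := hn₀ n hn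
  have hnpos : (0 : ℝ) < n := by exact_mod_cast hn1
  have hp : 0 < (n : ℝ) ^ (-ε) := Real.rpow_pos_of_pos hnpos _
  refine le_hypInjProb (by omega) _ fun π hπ => ?_
  generalize (n : ℝ) ^ (-ε) = p at *
  have hjp : 0 ≤ j * p := by positivity
  have hhp : 0 ≤ h * p := by positivity
  have hp1 : p ≤ 1 := by linarith
  have hnp' : (n : ℝ) * p ^ 2 ≤ n * p := by
    have : p ^ 2 ≤ p := pow_le_of_le_one hp.le hp1 two_ne_zero
    gcongr
  refine one_sub_le_subsetProb (allK n (j + 2)) hp.le hp1 (fun H hH hgood => ?_)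
    ((subsetProb_local_failure hπ hp.le hp1 hnp).trans htail)
  simp only [not_or, not_exists, not_and, not_lt] at hgood
  obtain ⟨ha, hb, hc⟩ := hgood
  refine conclusions_of_local (TemplateCovered H π) hp le_rfl hsmall (by linarith) H _ _
    (fun e he => (mem_powersetCard.1 (hH he)).2) (fun e => ?_) (fun f => ?_)
    (fun f hf => ha f (mem_powersetCard.2 ⟨subset_univ _, hf⟩))
    (fun S hS => hb S (mem_powersetCard.2 ⟨subset_univ _, hS⟩))
    (fun S x hS hx => hc (S, x) (mem_filter.2
      ⟨mem_product.2 ⟨mem_powersetCard.2 ⟨subset_univ _, hS⟩, mem_univ _⟩, hx⟩))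
    (hFm.le.trans hm2) π hπ ord hord (by push_cast; rfl)
  · simp only [mem_filter, TemplateCovered, not_exists, not_and, and_imp]
    exact Iff.rfl
  · simp only [mem_biUnion, mem_powersetCard]
    exact Iff.rfl
end

section
/- Let X, Y be finite sets with |X| ≤ |Y|, let C > 0, and let f : I(X,Y) → ℝ be a function on the set of injections from X to Y such that |f(π) − f(τ∘π)| ≤ C for every injection π ∈ I(X,Y) and every transposition τ ∈ Sym(Y). Let π be a uniformly random element of I(X,Y). Then for every t > 0: P[|f(π) − E f(π)| > t] ≤ 2·exp(−t²/(2|Y|C²)). -/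
open Finset

/-- A finite form of Hoeffding's lemma, for deviations bounded by `C` from the mean. -/
lemma sum_exp_mul_le_of_abs_sub_mean_le {ι : Type*} [Fintype ι] [Nonempty ι] (C l : ℝ)
    (v : ι → ℝ) (hv : ∀ i, |v i - (∑ j, v j) / Fintype.card ι| ≤ C) :
    ∑ i, Real.exp (l * v i) ≤
      Fintype.card ι * Real.exp (l * ((∑ j, v j) / Fintype.card ι) + l ^ 2 * C ^ 2 / 2) := by
  set m := (∑ j, v j) / Fintype.card ι with hm
  have hN : (0 : ℝ) < Fintype.card ι := by exact_mod_cast Fintype.card_pos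
  have hC : 0 ≤ C := (abs_nonneg _).trans (hv (Classical.arbitrary ι))
  set c := |l| * C with hc
  have hc0 : 0 ≤ c := by positivity
  have hchord : ∀ x : ℝ, |x| ≤ c → Real.exp x ≤ Real.cosh c + x * (Real.sinh c / c) := by
    intro x hx
    rcases hc0.eq_or_lt with h0 | hpos
    · rw [← h0] at hx ⊢
      have : x = 0 := abs_nonpos_iff.mp hx
      simp [this]
    · obtain ⟨h1, h2⟩ := abs_le.mp hx
      have hconv := convexOn_exp.2 (Set.mem_univ (-c)) (Set.mem_univ c)
        (show 0 ≤ (c - x) / (2 * c) from div_nonneg (by linarith) (by linarith))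
        (show 0 ≤ (c + x) / (2 * c) from div_nonneg (by linarith) (by linarith))
        (by field_simp; ring)
      have hx' : ((c - x) / (2 * c)) • (-c) + ((c + x) / (2 * c)) • c = x := by
        simp only [smul_eq_mul]; field_simp; ring
      rw [hx'] at hconv
      refine hconv.trans (le_of_eq ?_)
      rw [Real.cosh_eq, Real.sinh_eq]
      simp only [smul_eq_mul]; field_simp; ring
  have hsum0 : ∑ i, l * (v i - m) = 0 := by
    rw [← mul_sum, sum_sub_distrib, hm]
    simp only [sum_const, card_univ, nsmul_eq_mul]
    field_simp; ring
  have hle : ∑ i, Real.exp (l * (v i - m)) ≤ Fintype.card ι * Real.cosh c := by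
    calc ∑ i, Real.exp (l * (v i - m))
        ≤ ∑ i, (Real.cosh c + l * (v i - m) * (Real.sinh c / c)) := by
          refine sum_le_sum fun i _ => hchord _ ?_
          rw [abs_mul]
          exact mul_le_mul_of_nonneg_left (hv i) (abs_nonneg _)
      _ = Fintype.card ι * Real.cosh c := by
          rw [sum_add_distrib, ← sum_mul, hsum0]
          simp
  have hcosh : Real.cosh c ≤ Real.exp (l ^ 2 * C ^ 2 / 2) := by
    have := Real.cosh_le_exp_half_sq c
    rwa [hc, mul_pow, sq_abs] at this
  calc ∑ i, Real.exp (l * v i) = Real.exp (l * m) * ∑ i, Real.exp (l * (v i - m)) := by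
        rw [mul_sum]
        refine sum_congr rfl fun i _ => ?_
        rw [← Real.exp_add]; ring_nf
    _ ≤ Real.exp (l * m) * (Fintype.card ι * Real.exp (l ^ 2 * C ^ 2 / 2)) := by
        gcongr
        exact hle.trans (by gcongr)
    _ = _ := by rw [Real.exp_add]; ring

/-- The averages of a Lipschitz function over two cosets of the stabilizer of `none` are close. -/
lemma abs_sum_swap_mul_optionCongr_sub_le {α : Type*} [Fintype α] [DecidableEq α] {C : ℝ}
    (g : Equiv.Perm (Option α) → ℝ)
    (hg : ∀ (σ : Equiv.Perm (Option α)) (a b : Option α), a ≠ b →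
      |g σ - g (Equiv.swap a b * σ)| ≤ C) (hC : 0 ≤ C) (i j : Option α) :
    |∑ s : Equiv.Perm α, g (Equiv.swap none i * Equiv.optionCongr s) -
      ∑ s : Equiv.Perm α, g (Equiv.swap none j * Equiv.optionCongr s)| ≤
      Fintype.card (Equiv.Perm α) * C := by
  have key : ∀ u : Equiv.Perm α → ℝ, ∀ w : Equiv.Perm α → ℝ, (∀ s, |u s - w s| ≤ C) →
      |∑ s, u s - ∑ s, w s| ≤ Fintype.card (Equiv.Perm α) * C := by
    intro u w h
    rw [← sum_sub_distrib]
    refine (abs_sum_le_sum_abs _ _).trans ((sum_le_sum fun s _ => h s).trans ?_)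
    simp
  rcases eq_or_ne i j with rfl | hij
  · simpa using by positivity
  cases i with
  | none =>
    refine key _ _ fun s => ?_
    simpa [← Equiv.Perm.one_def] using
      hg (Equiv.optionCongr s) none j hij
  | some a =>
    cases j with
    | none =>
      refine key _ _ fun s => ?_
      rw [abs_sub_comm]
      simpa [← Equiv.Perm.one_def] using hg (Equiv.optionCongr s) none (some a) hij.symm
    | some b =>
      rw [← Equiv.sum_comp (Equiv.mulLeft (Equiv.swap a b))
        fun s => g (Equiv.swap none (some b) * Equiv.optionCongr s)]
      refine key _ _ fun s => ?_
      have h := hg (Equiv.swap none (some a) * Equiv.optionCongr s) (some a) (some b) hij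
      convert h using 4
      have h1 : (Equiv.optionCongr (Equiv.swap a b * s) : Equiv.Perm (Option α)) =
          Equiv.swap (some a) (some b) * Equiv.optionCongr s := by
        rw [← Equiv.optionCongr_swap]
        ext x : 1
        cases x <;> rfl
      rw [Equiv.coe_mulLeft, h1, ← mul_assoc, ← mul_assoc]
      congr 1
      rw [Equiv.mul_swap_eq_swap_mul (Equiv.swap (some a) (some b)),
        Equiv.swap_apply_of_ne_of_ne (by simp) (by simp), Equiv.swap_apply_left]

/-- The exponential moments of a Lipschitz function of a uniformly random permutation are
sub-Gaussian. -/
lemma sum_perm_exp_mul_le (C l : ℝ) (hC : 0 ≤ C) (α : Type*) [hα : Fintype α]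
    [hdec : DecidableEq α] (g : Equiv.Perm α → ℝ)
    (hg : ∀ (σ : Equiv.Perm α) (a b : α), a ≠ b → |g σ - g (Equiv.swap a b * σ)| ≤ C) :
    ∑ σ, Real.exp (l * g σ) ≤ Fintype.card (Equiv.Perm α) *
      Real.exp (l * ((∑ σ, g σ) / Fintype.card (Equiv.Perm α)) +
        Fintype.card α * (l ^ 2 * C ^ 2 / 2)) := by
  have hfin : Finite α := Finite.of_fintype α
  revert hα hdec g
  apply Finite.induction_empty_option (α := α)
  · intro α β e ih _ _ g hg
    classical
    let _ : Fintype α := Fintype.ofEquiv β e.symm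
    have h := ih (fun σ => g (e.permCongr σ)) fun σ a b hab => by
      have := hg (e.permCongr σ) (e a) (e b) (e.injective.ne hab)
      convert this using 4
      ext x
      simp [Equiv.permCongr_apply, e.injective.map_swap]
    rw [Equiv.sum_comp e.permCongr g, Equiv.sum_comp e.permCongr fun σ => Real.exp (l * g σ),
      Fintype.card_congr e.permCongr, Fintype.card_congr e] at h
    exact h
  · simp [Fintype.card_eq_zero]
  · intro α _ ih hα hdec g hg
    classical
    obtain rfl : hα = instFintypeOption := Subsingleton.elim _ _
    obtain rfl : hdec = Option.instDecidableEq := Subsingleton.elim _ _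
    set N : ℝ := (Fintype.card (Equiv.Perm α) : ℝ) with hN
    have hN0 : 0 < N := by rw [hN]; exact_mod_cast Fintype.card_pos
    set M : ℝ := (Fintype.card (Option α) : ℝ) with hM
    have hM0 : 0 < M := by rw [hM]; exact_mod_cast Fintype.card_pos
    have hMN : (Fintype.card (Equiv.Perm (Option α)) : ℝ) = M * N := by
      rw [Fintype.card_congr Equiv.Perm.decomposeOption, Fintype.card_prod]
      push_cast
      rfl
    have hsplit : ∀ F : Equiv.Perm (Option α) → ℝ,
        ∑ σ, F σ = ∑ i, ∑ s : Equiv.Perm α, F (Equiv.swap none i * Equiv.optionCongr s) := by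
      intro F
      rw [← Equiv.sum_comp Equiv.Perm.decomposeOption.symm F, Fintype.sum_prod_type]
      rfl
    set v : Option α → ℝ :=
      fun i => (∑ s : Equiv.Perm α, g (Equiv.swap none i * Equiv.optionCongr s)) / N with hv
    have hmean : (∑ σ, g σ) / (M * N) = (∑ i, v i) / M := by
      rw [hsplit g, hv, ← sum_div, div_div, mul_comm M N]
    have hclose : ∀ i j, |v i - v j| ≤ C := by
      intro i j
      rw [hv, ← sub_div, abs_div, abs_of_pos hN0, div_le_iff₀ hN0, mul_comm C]
      exact abs_sum_swap_mul_optionCongr_sub_le g hg hC i j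
    have hdev : ∀ i, |v i - (∑ j, v j) / M| ≤ C := by
      intro i
      have : v i - (∑ j, v j) / M = (∑ j, (v i - v j)) / M := by
        rw [sum_sub_distrib]
        simp only [sum_const, card_univ, nsmul_eq_mul, ← hM]
        field_simp
      rw [this, abs_div, abs_of_pos hM0, div_le_iff₀ hM0]
      refine (abs_sum_le_sum_abs _ _).trans ((sum_le_sum fun j _ => hclose i j).trans ?_)
      simp [hM, mul_comm]
    have hcoset : ∀ i, ∑ s : Equiv.Perm α,
        Real.exp (l * g (Equiv.swap none i * Equiv.optionCongr s)) ≤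
        N * (Real.exp (Fintype.card α * (l ^ 2 * C ^ 2 / 2)) * Real.exp (l * v i)) := by
      intro i
      rw [← Real.exp_add, add_comm]
      refine ih (fun s => g (Equiv.swap none i * Equiv.optionCongr s)) fun σ a b hab => ?_
      have h := hg (Equiv.swap none i * Equiv.optionCongr σ) (Equiv.swap none i (some a))
        (Equiv.swap none i (some b)) (by simpa using hab)
      rw [← mul_assoc, ← Equiv.mul_swap_eq_swap_mul, mul_assoc] at h
      convert h using 5
      rw [← Equiv.optionCongr_swap]
      ext x : 1
      cases x <;> rfl
    rw [hMN, hmean, hsplit]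
    calc _ ≤ ∑ i, N * (Real.exp (Fintype.card α * (l ^ 2 * C ^ 2 / 2)) * Real.exp (l * v i)) :=
          sum_le_sum fun i _ => hcoset i
      _ = N * Real.exp (Fintype.card α * (l ^ 2 * C ^ 2 / 2)) * ∑ i, Real.exp (l * v i) := by
          rw [mul_sum]
          exact sum_congr rfl fun i _ => by ring
      _ ≤ N * Real.exp (Fintype.card α * (l ^ 2 * C ^ 2 / 2)) *
          (M * Real.exp (l * ((∑ j, v j) / M) + l ^ 2 * C ^ 2 / 2)) := by
          gcongr
          exact sum_exp_mul_le_of_abs_sub_mean_le C l v hdev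
      _ = _ := by
          have hMα : M = Fintype.card α + 1 := by rw [hM, Fintype.card_option]; push_cast; rfl
          rw [show l * ((∑ i, v i) / M) + M * (l ^ 2 * C ^ 2 / 2) =
            Fintype.card α * (l ^ 2 * C ^ 2 / 2) +
              (l * ((∑ j, v j) / M) + l ^ 2 * C ^ 2 / 2) by rw [hMα]; ring,
            Real.exp_add (Fintype.card α * (l ^ 2 * C ^ 2 / 2))]
          ring

/-- Composing a fixed injection with a uniformly random permutation gives a uniformly random
injection. -/
lemma sum_perm_trans_div_card {X Y : Type*} [Fintype Y] [DecidableEq Y] [Fintype (X ↪ Y)]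
    (ι : X ↪ Y) (F : (X ↪ Y) → ℝ) :
    (∑ σ : Equiv.Perm Y, F (ι.trans σ.toEmbedding)) / Fintype.card (Equiv.Perm Y) =
      (∑ π, F π) / Fintype.card (X ↪ Y) := by
  have : Nonempty (X ↪ Y) := ⟨ι⟩
  have hP : (Fintype.card (Equiv.Perm Y) : ℝ) ≠ 0 := by exact_mod_cast Fintype.card_ne_zero
  have hI : (Fintype.card (X ↪ Y) : ℝ) ≠ 0 := by exact_mod_cast Fintype.card_ne_zero
  rw [div_eq_div_iff hP hI]
  have hfix : ∀ π : X ↪ Y, ∑ σ : Equiv.Perm Y, F (π.trans σ.toEmbedding) =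
      ∑ σ : Equiv.Perm Y, F (ι.trans σ.toEmbedding) := by
    intro π
    have : Finite X := Finite.of_injective ι ι.injective
    obtain ⟨ρ, hρ⟩ := Equiv.Perm.exists_extending_pair ι π ι.injective π.injective
    obtain rfl : ι.trans ρ.toEmbedding = π := by ext x; exact hρ x
    exact Equiv.sum_comp (Equiv.mulRight ρ) fun σ : Equiv.Perm Y => F (ι.trans σ.toEmbedding)
  have hshift : ∀ σ : Equiv.Perm Y, ∑ π : X ↪ Y, F (π.trans σ.toEmbedding) = ∑ π, F π :=
    fun σ => Equiv.sum_comp (Equiv.embeddingCongr (Equiv.refl X) σ) F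
  have h := sum_comm (s := (univ : Finset (X ↪ Y))) (t := (univ : Finset (Equiv.Perm Y)))
    (f := fun π σ => F (π.trans σ.toEmbedding))
  simp only [hfix, hshift, sum_const, card_univ, nsmul_eq_mul] at h
  linarith

/-- The exponential moments of a Lipschitz function of a uniformly random injection are
sub-Gaussian. -/
lemma sum_embedding_exp_mul_sub_mean_le {X Y : Type*} [Fintype Y] [DecidableEq Y]
    [Fintype (X ↪ Y)] [Nonempty (X ↪ Y)] {C : ℝ} (hC : 0 ≤ C) (f : (X ↪ Y) → ℝ)
    (hlip : ∀ (π : X ↪ Y) (a b : Y), a ≠ b →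
      |f π - f (π.trans (Equiv.swap a b).toEmbedding)| ≤ C) (l : ℝ) :
    (∑ π, Real.exp (l * (f π - (∑ σ, f σ) / Fintype.card (X ↪ Y)))) / Fintype.card (X ↪ Y) ≤
      Real.exp (Fintype.card Y * (l ^ 2 * C ^ 2 / 2)) := by
  obtain ⟨ι⟩ := ‹Nonempty (X ↪ Y)›
  have h := sum_perm_exp_mul_le C l hC Y (fun σ => f (ι.trans σ.toEmbedding))
    fun σ a b hab => hlip (ι.trans σ.toEmbedding) a b hab
  have hP : (0 : ℝ) < Fintype.card (Equiv.Perm Y) := by exact_mod_cast Fintype.card_pos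
  rw [← div_le_iff₀' hP, sum_perm_trans_div_card ι f,
    sum_perm_trans_div_card ι fun π => Real.exp (l * f π), Real.exp_add] at h
  set m := (∑ σ, f σ) / Fintype.card (X ↪ Y)
  calc _ = Real.exp (-(l * m)) * ((∑ π, Real.exp (l * f π)) / Fintype.card (X ↪ Y)) := by
        rw [← mul_div_assoc, mul_sum]
        congr 1
        refine sum_congr rfl fun π _ => ?_
        rw [← Real.exp_add]; ring_nf
    _ ≤ Real.exp (-(l * m)) *
        (Real.exp (l * m) * Real.exp (Fintype.card Y * (l ^ 2 * C ^ 2 / 2))) := by gcongr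
    _ = _ := by rw [← mul_assoc, ← Real.exp_add]; simp

open Classical in
/-- concentration for functions of a uniformly random injection
that are Lipschitz with respect to composing with a transposition of `Y`. -/
theorem stmt_15 (X Y : Type*) [Fintype X] [Fintype Y] [DecidableEq X] [DecidableEq Y]
    (hcard : Fintype.card X ≤ Fintype.card Y)
    (C : ℝ) (hC : 0 < C) (f : (X ↪ Y) → ℝ)
    (hlip : ∀ (π : X ↪ Y) (a b : Y), a ≠ b →
      |f π - f (π.trans (Equiv.swap a b).toEmbedding)| ≤ C)
    (t : ℝ) (ht : 0 < t) :
    ((Finset.univ.filter fun π : X ↪ Y =>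
        |f π - (∑ σ : X ↪ Y, f σ) / (Fintype.card (X ↪ Y))| > t).card : ℝ) /
      (Fintype.card (X ↪ Y)) ≤
    2 * Real.exp (-(t ^ 2) / (2 * (Fintype.card Y) * C ^ 2)) := by
  have hne : Nonempty (X ↪ Y) := Function.Embedding.nonempty_of_card_le hcard
  have hI : (0 : ℝ) < Fintype.card (X ↪ Y) := by exact_mod_cast Fintype.card_pos
  rcases Nat.eq_zero_or_pos (Fintype.card Y) with hY | hY
  · rw [div_le_iff₀ hI, hY]
    have : ((Finset.univ.filter fun π : X ↪ Y =>
        |f π - (∑ σ : X ↪ Y, f σ) / (Fintype.card (X ↪ Y))| > t).card : ℝ) ≤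
        Fintype.card (X ↪ Y) := by exact_mod_cast card_le_univ _
    simp only [Nat.cast_zero, mul_zero, zero_mul, div_zero, Real.exp_zero]
    linarith
  have hn : (0 : ℝ) < Fintype.card Y := by exact_mod_cast hY
  set m := (∑ σ : X ↪ Y, f σ) / (Fintype.card (X ↪ Y)) with hm
  set n : ℝ := (Fintype.card Y : ℝ) with hn_def
  set l := t / (n * C ^ 2) with hl
  have hl0 : 0 < l := by positivity
  have hpos := sum_embedding_exp_mul_sub_mean_le hC.le f hlip l
  have hneg := sum_embedding_exp_mul_sub_mean_le hC.le f hlip (-l)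
  rw [← hm, ← hn_def] at hpos hneg
  have hmarkov : ((Finset.univ.filter fun π : X ↪ Y => |f π - m| > t).card : ℝ) ≤
      ∑ π, Real.exp (-(l * t)) * (Real.exp (l * (f π - m)) + Real.exp (-l * (f π - m))) := by
    rw [card_eq_sum_ones, Nat.cast_sum, sum_filter]
    refine sum_le_sum fun π _ => ?_
    split_ifs with h
    · rw [mul_add, ← Real.exp_add, ← Real.exp_add, Nat.cast_one]
      rcases lt_abs.mp h with h | h
      · have : 1 ≤ Real.exp (-(l * t) + l * (f π - m)) := Real.one_le_exp (by nlinarith)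
        linarith [Real.exp_pos (-(l * t) + -l * (f π - m))]
      · have : 1 ≤ Real.exp (-(l * t) + -l * (f π - m)) := Real.one_le_exp (by nlinarith)
        linarith [Real.exp_pos (-(l * t) + l * (f π - m))]
    · positivity
  rw [← mul_sum, sum_add_distrib] at hmarkov
  calc _ ≤ Real.exp (-(l * t)) * ((∑ π, Real.exp (l * (f π - m))) / Fintype.card (X ↪ Y) +
        (∑ π, Real.exp (-l * (f π - m))) / Fintype.card (X ↪ Y)) := by
        rw [← add_div, ← mul_div_assoc]
        gcongr
    _ ≤ Real.exp (-(l * t)) * (Real.exp (n * (l ^ 2 * C ^ 2 / 2)) +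
        Real.exp (n * ((-l) ^ 2 * C ^ 2 / 2))) := by gcongr
    _ = 2 * Real.exp (-(l * t) + n * (l ^ 2 * C ^ 2 / 2)) := by
        rw [neg_sq, Real.exp_add]; ring
    _ = _ := by
        congr 2
        rw [hl]
        field_simp
        ring
end

section
/- Let k ≥ 2 and let x_1,...,x_k, a_1,...,a_k be 2k distinct vertices, writing x = {x_1,...,x_k}. For each nonempty I ⊆ [k] of even size, let b^I_1,...,b^I_k be vertices such that the k vertices of the edge e_I of C_{x,a} together with b^I_1,...,b^I_k are 2k distinct vertices, so that the cross-polytope C_{e_I, b^I} is defined (pairing the i-th vertex of e_I with b^I_i), and suppose that all the vertices x_1,...,x_k, a_1,...,a_k and b^I_j (over all such I and all j) are pairwise distinct. Let A = C^{odd}_{x,a} ∪ ∪_I (C_{e_I,b^I} \ {e_I}), the union over nonempty even-sized I ⊆ [k]. Then: (1) A^{alg} := ∪_I C^{odd}_{e_I,b^I} is a K_k-decomposition of K_{k−1}(A) \ K_{k−1}(x), and (2) A^{non-alg} := C^{odd}_{x,a} ∪ ∪_I (C^{even}_{e_I,b^I} \ {e_I}) is a K_k-decomposition of K_{k−1}(A).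 -/
open Finset

/-- A set `S` of `k`-subsets, each having all its `(k-1)`-subsets in `G`,
such that every facet of `G` lies in exactly one edge of `S`. -/
def IsKDecompositionOf {V : Type*} [DecidableEq V] (k : ℕ) (G S : Finset (Finset V)) : Prop :=
  (∀ e ∈ S, e.card = k ∧ ∀ f ⊆ e, f.card = k - 1 → f ∈ G) ∧
  (∀ f ∈ G, ∃! e, e ∈ S ∧ f ⊆ e)

/-- The set of all `(k-1)`-subsets of edges of `H`. -/
def facetsOf {V : Type*} [DecidableEq V] (k : ℕ) (H : Finset (Finset V)) :
    Finset (Finset V) :=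
  H.biUnion fun e => e.powersetCard (k - 1)

/-- The `i`-th vertex of the edge `e_I` of the cross-polytope `C_{x,a}`. -/
def cpVert {V : Type*} {k : ℕ} (x a : Fin k → V) (I : Finset (Fin k)) (i : Fin k) : V :=
  if i ∈ I then a i else x i

/-- The edge `e_I` of the cross-polytope `C_{x,a}`. -/
def cpEdge {V : Type*} [DecidableEq V] {k : ℕ} (x a : Fin k → V) (I : Finset (Fin k)) :
    Finset V :=
  Finset.univ.image (cpVert x a I)

/-- The odd edges of the cross-polytope `C_{x,a}`. -/
def cpOdd {V : Type*} [DecidableEq V] {k : ℕ} (x a : Fin k → V) : Finset (Finset V) :=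
  (Finset.univ.filter fun I : Finset (Fin k) => Odd I.card).image (cpEdge x a)

/-- The even edges of the cross-polytope `C_{x,a}`. -/
def cpEven {V : Type*} [DecidableEq V] {k : ℕ} (x a : Fin k → V) : Finset (Finset V) :=
  (Finset.univ.filter fun I : Finset (Fin k) => Even I.card).image (cpEdge x a)

/-- The nonempty even-sized subsets of `[k]`. -/
def evenIdx (k : ℕ) : Finset (Finset (Fin k)) :=
  Finset.univ.filter fun I : Finset (Fin k) => I.Nonempty ∧ Even I.card

section Words

variable {V : Type*} [DecidableEq V] {k : ℕ}

theorem subset_image_card_pred_iff {w : Fin k → V} (hw : Function.Injective w) (hk : 2 ≤ k)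
    (f : Finset V) :
    (f ⊆ univ.image w ∧ f.card = k - 1) ↔ ∃ i, f = (univ.erase i).image w := by
  constructor
  · rintro ⟨hf, hc⟩
    obtain ⟨s, -, rfl⟩ := Finset.subset_image_iff.1 hf
    rw [card_image_of_injective _ hw] at hc
    have hs : sᶜ.card = 1 := by
      rw [card_compl, Fintype.card_fin]
      omega
    obtain ⟨i, hi⟩ := card_eq_one.1 hs
    refine ⟨i, ?_⟩
    rw [← compl_compl s, hi, compl_singleton]
  · rintro ⟨i, rfl⟩
    refine ⟨image_subset_image (erase_subset _ _), ?_⟩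
    rw [card_image_of_injective _ hw, card_erase_of_mem (mem_univ i), card_univ, Fintype.card_fin]

/-- A criterion for decompositions of `k`-partite hypergraphs, with edges indexed by words:
`P` selects the edges of the ambient hypergraph, `Q` those of the decomposition, and `B` the
facets that are removed. -/
theorem isKDecompositionOf_of_words (hk : 2 ≤ k) {ι : Type*} (w : ι → Fin k → V)
    (P Q : ι → Prop) (B : Finset V → Prop) (G S : Finset (Finset V))
    (hpart : ∀ p q, P p → P q → ∀ i j, w p i = w q j → i = j)
    (hG : ∀ f, f ∈ G ↔ (∃ p, P p ∧ f ⊆ univ.image (w p) ∧ f.card = k - 1) ∧ ¬ B f)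
    (hS : ∀ e, e ∈ S ↔ ∃ q, Q q ∧ univ.image (w q) = e)
    (hQP : ∀ q, Q q → P q)
    (hQB : ∀ q, Q q → ∀ i, ¬ B ((univ.erase i).image (w q)))
    (hex : ∀ p, P p → ∀ i, ¬ B ((univ.erase i).image (w p)) →
      ∃ q, Q q ∧ ∀ j, j ≠ i → w p j = w q j)
    (huniq : ∀ q q', Q q → Q q' → ∀ i, (∀ j, j ≠ i → w q j = w q' j) → q = q') :
    IsKDecompositionOf k G S := by
  have hinj : ∀ p, P p → Function.Injective (w p) := fun p hp i j h => hpart p p hp hp i j h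
  have hsub : ∀ p q, P p → P q → ∀ i, (univ.erase i).image (w p) ⊆ univ.image (w q) →
      ∀ j, j ≠ i → w p j = w q j := by
    intro p q hp hq i h j hj
    obtain ⟨l, -, hl⟩ := mem_image.1 (h (mem_image_of_mem _ (mem_erase.2 ⟨hj, mem_univ j⟩)))
    rw [← hl, hpart q p hq hp l j hl]
  constructor
  · intro e he
    obtain ⟨q, hq, rfl⟩ := (hS e).1 he
    refine ⟨?_, fun f hf hc => (hG f).2 ⟨⟨q, hQP q hq, hf, hc⟩, ?_⟩⟩
    · rw [card_image_of_injective _ (hinj q (hQP q hq)), card_univ, Fintype.card_fin]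
    · obtain ⟨i, rfl⟩ := (subset_image_card_pred_iff (hinj q (hQP q hq)) hk f).1 ⟨hf, hc⟩
      exact hQB q hq i
  · intro f hf
    obtain ⟨⟨p, hp, hfp⟩, hB⟩ := (hG f).1 hf
    obtain ⟨i, rfl⟩ := (subset_image_card_pred_iff (hinj p hp) hk f).1 hfp
    obtain ⟨q, hq, hpq⟩ := hex p hp i hB
    refine ⟨univ.image (w q), ⟨(hS _).2 ⟨q, hq, rfl⟩, ?_⟩, ?_⟩
    · intro v hv
      obtain ⟨j, hj, rfl⟩ := mem_image.1 hv
      rw [hpq j (ne_of_mem_erase hj)]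
      exact mem_image_of_mem _ (mem_univ j)
    · rintro e ⟨he, hfe⟩
      obtain ⟨q', hq', rfl⟩ := (hS e).1 he
      have h := hsub p q' hp (hQP q' hq') i hfe
      rw [huniq q q' hq hq' i fun j hj => (hpq j hj).symm.trans (h j hj)]

end Words

section Parity

variable {α : Type*}

theorem exists_agree_off_of_flip_parity [DecidableEq α] (s : Finset α) (i : α) :
    ∃ t : Finset α, (∀ j, j ≠ i → (j ∈ s ↔ j ∈ t)) ∧ (Even t.card ↔ ¬ Even s.card) := by
  by_cases h : i ∈ s
  · refine ⟨s.erase i, fun j hj => by simp [hj], ?_⟩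
    rw [← card_erase_add_one h]
    grind
  · refine ⟨insert i s, fun j hj => by simp [hj], ?_⟩
    rw [card_insert_of_notMem h]
    grind

theorem eq_of_agree_off_of_parity [DecidableEq α] {s t : Finset α} {i : α}
    (h : ∀ j, j ≠ i → (j ∈ s ↔ j ∈ t)) (hp : Even s.card ↔ Even t.card) : s = t := by
  have he : s.erase i = t.erase i := by
    ext j
    by_cases hj : j = i
    · simp [hj]
    · simp [hj, h j hj]
  by_cases hs : i ∈ s <;> by_cases ht : i ∈ t
  · rw [← insert_erase hs, ← insert_erase ht, he]
  · rw [← card_erase_add_one hs, he, erase_eq_of_notMem ht] at hp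
    grind
  · rw [← card_erase_add_one ht, ← he, erase_eq_of_notMem hs] at hp
    grind
  · rw [← erase_eq_of_notMem hs, ← erase_eq_of_notMem ht, he]

theorem exists_mem_ne_of_even {s : Finset α} (hs : s.Nonempty) (he : Even s.card) (i : α) :
    ∃ j ∈ s, j ≠ i := by
  refine exists_mem_ne ?_ i
  have := hs.card_pos
  grind

theorem exists_mem_ne_or_eq_singleton {s : Finset α} (hs : s.Nonempty) (i : α) :
    (∃ j ∈ s, j ≠ i) ∨ s = {i} := by
  by_cases h : ∃ j ∈ s, j ≠ i
  · exact Or.inl h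
  · push Not at h
    exact Or.inr (eq_singleton_iff_nonempty_unique_mem.2 ⟨hs, h⟩)

theorem nonempty_of_odd_card {s : Finset α} (hs : ¬ Even s.card) : s.Nonempty := by
  rw [nonempty_iff_ne_empty]
  rintro rfl
  simp at hs

end Parity

section Absorber

variable {V : Type*} {k : ℕ}

/-- The vertices of the edge `e_J` of `C_{e_I, b^I}`, indexed by the pair `(I, J)`. -/
def absorberVert (x a : Fin k → V) (b : Finset (Fin k) → Fin k → V)
    (p : Finset (Fin k) × Finset (Fin k)) : Fin k → V :=
  cpVert (cpVert x a p.1) (b p.1) p.2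

/-- The indices of the edges of the absorber: an odd `I` with `J` empty, or a nonempty even `I`
with `J` nonempty. -/
def AbsorberIdx (p : Finset (Fin k) × Finset (Fin k)) : Prop :=
  (p.2 = ∅ ∧ ¬ Even p.1.card) ∨ (p.1 ∈ evenIdx k ∧ p.2.Nonempty)

variable {x a : Fin k → V} {b : Finset (Fin k) → Fin k → V}

theorem absorberVert_of_empty (I : Finset (Fin k)) :
    absorberVert x a b (I, ∅) = cpVert x a I := by
  funext i
  simp [absorberVert, cpVert]

theorem absorberVert_eq_iff
    (hdistinct : Function.Injective
      (Sum.elim x (Sum.elim a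
        (fun p : {I : Finset (Fin k) // I ∈ evenIdx k} × Fin k => b p.1.1 p.2))))
    {p q : Finset (Fin k) × Finset (Fin k)} (hp : AbsorberIdx p) (hq : AbsorberIdx q)
    (i j : Fin k) :
    absorberVert x a b p i = absorberVert x a b q j ↔
      i = j ∧ (i ∈ p.2 ↔ i ∈ q.2) ∧ (i ∈ p.2 → p.1 = q.1) ∧
        (i ∉ p.2 → (i ∈ p.1 ↔ i ∈ q.1)) := by
  have lift : ∀ r : Finset (Fin k) × Finset (Fin k), AbsorberIdx r → ∀ l, l ∈ r.2 →
      r.1 ∈ evenIdx k := by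
    rintro r (⟨h, -⟩ | ⟨h, -⟩) l hl
    · simp [h] at hl
    · exact h
  have hxx : ∀ i j, x i = x j → i = j := fun i j h => by
    simpa using @hdistinct (.inl i) (.inl j) h
  have haa : ∀ i j, a i = a j → i = j := fun i j h => by
    simpa using @hdistinct (.inr (.inl i)) (.inr (.inl j)) h
  have hxa : ∀ i j, x i ≠ a j := fun i j h => by
    simpa using @hdistinct (.inl i) (.inr (.inl j)) h
  have hxb : ∀ i, ∀ I ∈ evenIdx k, ∀ j, x i ≠ b I j := fun i I hI j h => by
    simpa using @hdistinct (.inl i) (.inr (.inr (⟨I, hI⟩, j))) h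
  have hab : ∀ i, ∀ I ∈ evenIdx k, ∀ j, a i ≠ b I j := fun i I hI j h => by
    simpa using @hdistinct (.inr (.inl i)) (.inr (.inr (⟨I, hI⟩, j))) h
  have hbb : ∀ I ∈ evenIdx k, ∀ J ∈ evenIdx k, ∀ i j, b I i = b J j → I = J ∧ i = j :=
    fun I hI J hJ i j h => by
      simpa using @hdistinct (.inr (.inr (⟨I, hI⟩, i))) (.inr (.inr (⟨J, hJ⟩, j))) h
  have hp' := lift p hp
  have hq' := lift q hq
  unfold absorberVert cpVert
  constructor
  · intro h
    split_ifs at h <;> grind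
  · rintro ⟨rfl, h₁, h₂, h₃⟩
    grind

theorem mem_evenIdx {I : Finset (Fin k)} : I ∈ evenIdx k ↔ I.Nonempty ∧ Even I.card := by
  simp [evenIdx]

end Absorber

section Decomposition

variable {V : Type*} [DecidableEq V] {k : ℕ} {x a : Fin k → V} {b : Finset (Fin k) → Fin k → V}

theorem mem_facetsOf_absorber (f : Finset V) :
    f ∈ facetsOf k
        (cpOdd x a ∪ (evenIdx k).biUnion fun I =>
          ((Finset.univ.filter fun J : Finset (Fin k) => J.Nonempty).image
            fun J => cpEdge (cpVert x a I) (b I) J)) ↔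
      ∃ p, AbsorberIdx p ∧ f ⊆ univ.image (absorberVert x a b p) ∧ f.card = k - 1 := by
  simp only [facetsOf, cpOdd, mem_biUnion, mem_union, mem_image, mem_filter, mem_univ, true_and,
    mem_powersetCard]
  constructor
  · rintro ⟨e, ⟨I, hI, rfl⟩ | ⟨I, hI, J, hJ, rfl⟩, hf⟩
    · refine ⟨(I, ∅), Or.inl ⟨rfl, Nat.not_even_iff_odd.2 hI⟩, ?_⟩
      rwa [absorberVert_of_empty]
    · exact ⟨(I, J), Or.inr ⟨hI, hJ⟩, hf⟩
  · rintro ⟨⟨I, J⟩, ⟨hJ, hI⟩ | ⟨hI, hJ⟩, hf⟩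
    · obtain rfl : J = ∅ := hJ
      rw [absorberVert_of_empty] at hf
      exact ⟨_, Or.inl ⟨I, Nat.not_even_iff_odd.1 hI, rfl⟩, hf⟩
    · exact ⟨_, Or.inr ⟨I, hI, J, hJ, rfl⟩, hf⟩

end Decomposition

/-- the absorber `A` built from the cross-polytope `C_{x,a}`
together with associated cross-polytopes `C_{e_I, b^I}` on the nonempty even
edges admits two decompositions: the algebraic one, `A^{alg} = ∪_I C^{odd}_{e_I,b^I}`,
decomposing `K_{k-1}(A) \ K_{k-1}(x)`, and the non-algebraic one,
`A^{non-alg} = C^{odd}_{x,a} ∪ ∪_I (C^{even}_{e_I,b^I} \ {e_I})`,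
decomposing `K_{k-1}(A)`. -/
theorem stmt_16 {V : Type*} [DecidableEq V] (k : ℕ) (hk : 2 ≤ k)
    (x a : Fin k → V) (b : Finset (Fin k) → Fin k → V)
    (hdistinct : Function.Injective
      (Sum.elim x (Sum.elim a
        (fun p : {I : Finset (Fin k) // I ∈ evenIdx k} × Fin k => b p.1.1 p.2)))) :
    IsKDecompositionOf k
      ((facetsOf k
          (cpOdd x a ∪ (evenIdx k).biUnion fun I =>
            ((Finset.univ.filter fun J : Finset (Fin k) => J.Nonempty).image
              fun J => cpEdge (cpVert x a I) (b I) J))) \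
        (Finset.univ.image x).powersetCard (k - 1))
      ((evenIdx k).biUnion fun I =>
        (Finset.univ.filter fun J : Finset (Fin k) => Odd J.card).image
          fun J => cpEdge (cpVert x a I) (b I) J) ∧
    IsKDecompositionOf k
      (facetsOf k
        (cpOdd x a ∪ (evenIdx k).biUnion fun I =>
          ((Finset.univ.filter fun J : Finset (Fin k) => J.Nonempty).image
            fun J => cpEdge (cpVert x a I) (b I) J)))
      (cpOdd x a ∪ (evenIdx k).biUnion fun I =>
        (Finset.univ.filter fun J : Finset (Fin k) => J.Nonempty ∧ Even J.card).image
          fun J => cpEdge (cpVert x a I) (b I) J) := by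
  have hpart : ∀ p q : Finset (Fin k) × Finset (Fin k), AbsorberIdx p → AbsorberIdx q →
      ∀ i j, absorberVert x a b p i = absorberVert x a b q j → i = j :=
    fun p q hp hq i j h => ((absorberVert_eq_iff hdistinct hp hq i j).1 h).1
  constructor
  · have hQP : ∀ q : Finset (Fin k) × Finset (Fin k), q.1 ∈ evenIdx k ∧ ¬ Even q.2.card →
        AbsorberIdx q := fun q hq => Or.inr ⟨hq.1, nonempty_of_odd_card hq.2⟩
    refine isKDecompositionOf_of_words hk (absorberVert x a b) AbsorberIdx
      (fun q => q.1 ∈ evenIdx k ∧ ¬ Even q.2.card)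
      (fun f => f ∈ (univ.image x).powersetCard (k - 1)) _ _ hpart ?_ ?_ hQP ?_ ?_ ?_
    · intro f
      rw [mem_sdiff, mem_facetsOf_absorber]
    · intro e
      simp only [mem_biUnion, mem_image, mem_filter, mem_univ, true_and, Prod.exists,
        Nat.not_even_iff_odd, and_assoc, exists_and_left]
      rfl
    · rintro ⟨I, J⟩ ⟨hI, hJ⟩ i hB
      have hsub := (mem_powersetCard.1 hB).1
      obtain ⟨hIn, hIe⟩ := mem_evenIdx.1 hI
      obtain ⟨j, hj, hji⟩ := exists_mem_ne_of_even hIn hIe i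
      obtain ⟨l, -, hl⟩ :=
        mem_image.1 (hsub (mem_image_of_mem _ (mem_erase.2 ⟨hji, mem_univ j⟩)))
      by_cases hJj : j ∈ J
      · rw [absorberVert, cpVert, if_pos hJj] at hl
        simpa using @hdistinct (.inl l) (.inr (.inr (⟨I, hI⟩, j))) hl
      · rw [absorberVert, cpVert, if_neg hJj, cpVert, if_pos hj] at hl
        simpa using @hdistinct (.inl l) (.inr (.inl j)) hl
    · rintro ⟨I, J⟩ hp i hB
      suffices h : ∃ q : Finset (Fin k) × Finset (Fin k), (q.1 ∈ evenIdx k ∧ ¬ Even q.2.card) ∧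
          ∀ j, j ≠ i → (j ∈ J ↔ j ∈ q.2) ∧ (j ∈ J → I = q.1) ∧ (j ∉ J → (j ∈ I ↔ j ∈ q.1)) by
        obtain ⟨q, hq, h⟩ := h
        exact ⟨q, hq, fun j hj =>
          (absorberVert_eq_iff hdistinct hp (hQP q hq) j j).2 ⟨rfl, h j hj⟩⟩
      rcases hp with ⟨hJ, hI⟩ | ⟨hI, hJ⟩
      · obtain rfl : J = ∅ := hJ
        obtain ⟨I', hI', hpar⟩ := exists_agree_off_of_flip_parity I i
        rcases I'.eq_empty_or_nonempty with rfl | hne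
        · refine absurd (mem_powersetCard.2 ((subset_image_card_pred_iff
            (fun l m h => by simpa using @hdistinct (.inl l) (.inl m) h) hk _).2 ⟨i, ?_⟩)) hB
          rw [absorberVert_of_empty]
          refine image_congr fun j hj => ?_
          have := hI' j (ne_of_mem_erase hj)
          simp_all [cpVert]
        · refine ⟨(I', {i}), ⟨mem_evenIdx.2 ⟨hne, hpar.2 hI⟩, by simp⟩, fun j hj => ?_⟩
          simp [hj, hI' j hj]
      · by_cases hpar : Even J.card
        · obtain ⟨J', hJ', hpar'⟩ := exists_agree_off_of_flip_parity J i
          exact ⟨(I, J'), ⟨hI, fun h => hpar'.1 h hpar⟩, fun j hj => by simp [hJ' j hj]⟩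
        · exact ⟨(I, J), ⟨hI, hpar⟩, by simp⟩
    · rintro ⟨I, J⟩ ⟨I', J'⟩ hq hq' i h
      replace h := fun j hj =>
        ((absorberVert_eq_iff hdistinct (hQP _ hq) (hQP _ hq') j j).1 (h j hj)).2
      obtain ⟨hI, hJ⟩ := hq
      obtain ⟨hI', hJ'⟩ := hq'
      obtain rfl : J = J' := eq_of_agree_off_of_parity (fun j hj => (h j hj).1) (iff_of_false hJ hJ')
      rcases exists_mem_ne_or_eq_singleton (nonempty_of_odd_card hJ) i with ⟨j, hj, hji⟩ | rfl
      · rw [show I = I' from (h j hji).2.1 hj]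
      · rw [mem_evenIdx] at hI hI'
        obtain rfl : I = I' := eq_of_agree_off_of_parity
          (fun j hj => (h j hj).2.2 (by simpa using hj)) (iff_of_true hI.2 hI'.2)
        rfl
  · have hQP : ∀ q : Finset (Fin k) × Finset (Fin k),
        ((q.2 = ∅ ∧ ¬ Even q.1.card) ∨ (q.1 ∈ evenIdx k ∧ q.2.Nonempty ∧ Even q.2.card)) →
          AbsorberIdx q :=
      fun q hq => hq.imp id fun h => ⟨h.1, h.2.1⟩
    refine isKDecompositionOf_of_words hk (absorberVert x a b) AbsorberIdx
      (fun q => (q.2 = ∅ ∧ ¬ Even q.1.card) ∨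
        (q.1 ∈ evenIdx k ∧ q.2.Nonempty ∧ Even q.2.card))
      (fun _ => False) _ _ hpart ?_ ?_ hQP (fun _ _ _ => id) ?_ ?_
    · intro f
      rw [mem_facetsOf_absorber, not_false_eq_true, and_true]
    · intro e
      simp only [cpOdd, mem_union, mem_biUnion, mem_image, mem_filter, mem_univ, true_and]
      constructor
      · rintro (⟨I, hI, rfl⟩ | ⟨I, hI, J, hJ, rfl⟩)
        · refine ⟨(I, ∅), Or.inl ⟨rfl, Nat.not_even_iff_odd.2 hI⟩, ?_⟩
          rw [absorberVert_of_empty]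
          rfl
        · exact ⟨(I, J), Or.inr ⟨hI, hJ⟩, rfl⟩
      · rintro ⟨⟨I, J⟩, ⟨hJ, hI⟩ | ⟨hI, hJ⟩, rfl⟩
        · obtain rfl : J = ∅ := hJ
          rw [absorberVert_of_empty]
          exact Or.inl ⟨I, Nat.not_even_iff_odd.1 hI, rfl⟩
        · exact Or.inr ⟨I, hI, J, hJ, rfl⟩
    · rintro ⟨I, J⟩ hp i -
      suffices h : ∃ q : Finset (Fin k) × Finset (Fin k),
          ((q.2 = ∅ ∧ ¬ Even q.1.card) ∨ (q.1 ∈ evenIdx k ∧ q.2.Nonempty ∧ Even q.2.card)) ∧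
          ∀ j, j ≠ i → (j ∈ J ↔ j ∈ q.2) ∧ (j ∈ J → I = q.1) ∧ (j ∉ J → (j ∈ I ↔ j ∈ q.1)) by
        obtain ⟨q, hq, h⟩ := h
        exact ⟨q, hq, fun j hj =>
          (absorberVert_eq_iff hdistinct hp (hQP q hq) j j).2 ⟨rfl, h j hj⟩⟩
      rcases hp with ⟨hJ, hI⟩ | ⟨hI, hJ⟩
      · exact ⟨(I, J), Or.inl ⟨hJ, hI⟩, by simp⟩
      · by_cases hpar : Even J.card
        · exact ⟨(I, J), Or.inr ⟨hI, hJ, hpar⟩, by simp⟩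
        · obtain ⟨J', hJ', hpar'⟩ := exists_agree_off_of_flip_parity J i
          rcases J'.eq_empty_or_nonempty with rfl | hne
          · obtain ⟨I', hI', hparI⟩ := exists_agree_off_of_flip_parity I i
            refine ⟨(I', ∅), Or.inl ⟨rfl, fun h => hparI.1 h (mem_evenIdx.1 hI).2⟩,
              fun j hj => ?_⟩
            have := hJ' j hj
            simp_all
          · exact ⟨(I, J'), Or.inr ⟨hI, hne, hpar'.2 hpar⟩, fun j hj => by simp [hJ' j hj]⟩
    · rintro ⟨I, J⟩ ⟨I', J'⟩ hq hq' i h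
      replace h := fun j hj =>
        ((absorberVert_eq_iff hdistinct (hQP _ hq) (hQP _ hq') j j).1 (h j hj)).2
      have heven : Even J.card ↔ Even J'.card := by
        rcases hq with ⟨h₁, -⟩ | ⟨-, -, h₁⟩ <;> rcases hq' with ⟨h₂, -⟩ | ⟨-, -, h₂⟩ <;> simp_all
      obtain rfl : J = J' := eq_of_agree_off_of_parity (fun j hj => (h j hj).1) heven
      rcases hq with ⟨hJ, hI⟩ | ⟨hI, hJ, hpar⟩
      · obtain rfl : J = ∅ := hJ
        have hI' : ¬ Even I'.card := by simpa using hq'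
        obtain rfl : I = I' := eq_of_agree_off_of_parity
          (fun j hj => (h j hj).2.2 (by simp)) (iff_of_false hI hI')
        rfl
      · obtain ⟨j, hj, hji⟩ := exists_mem_ne_of_even hJ hpar i
        rw [show I = I' from (h j hji).2.1 hj]
end

section
/- Let k ≥ 2 and n ∈ ℕ. Let T, N, S ⊆ K_k^n be pairwise facet-disjoint partial designs such that T ∪ N ∪ S is a K_k-decomposition of K_{k−1}^n, and write S = {s_1,...,s_m}. Suppose that for each i ∈ [m] there are sets of edges A_i, A_i^{alg}, A_i^{non-alg} ⊆ K_k^n such that: (i) A_i^{alg} ⊆ T; (ii) K_{k−1}(s_i) ⊆ K_{k−1}(A_i); (iii) A_i^{alg} is a K_k-decomposition of K_{k−1}(A_i) \ K_{k−1}(s_i); (iv) A_i^{non-alg} is a K_k-decomposition of K_{k−1}(A_i); and (v) the sets K_{k−1}(A_1),...,K_{k−1}(A_m) are pairwise disjoint. Then N ∪ (T \ ∪_{i=1}^m A_i^{alg}) ∪ ∪_{i=1}^m A_i^{non-alg} is a K_k-decomposition of K_{k−1}^n. -/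
open Finset

/-- A partial design: a set of `k`-subsets, pairwise sharing at most `k-2` vertices. -/
def IsPartialDesign {V : Type*} [DecidableEq V] (k : ℕ) (P : Finset (Finset V)) : Prop :=
  (∀ e ∈ P, e.card = k) ∧
  ∀ e ∈ P, ∀ e' ∈ P, e ≠ e' → (e ∩ e').card < k - 1

/-- Two edge sets are facet-disjoint: no `(k-1)`-set lies in an edge of both. -/
def FacetDisjointSets {V : Type*} [DecidableEq V] (k : ℕ) (A B : Finset (Finset V)) : Prop :=
  ∀ f : Finset V, f.card = k - 1 → ¬((∃ e ∈ A, f ⊆ e) ∧ (∃ e ∈ B, f ⊆ e))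

/-- replacing the edges `s ∈ S` of a decomposition `T ∪ N ∪ S` of
`K_{k-1}^n` by absorbers: if for each `s ∈ S` the sets `A s`, `Aalg s ⊆ T`,
`Anonalg s` satisfy the absorption properties (iii)-(iv), the facet sets of the
`A s` being pairwise disjoint, then
`N ∪ (T \ ∪ Aalg) ∪ ∪ Anonalg` is again a decomposition of `K_{k-1}^n`. -/
theorem stmt_17 (k n : ℕ) (hk : 2 ≤ k)
    (T N S : Finset (Finset (Fin n)))
    (hT : IsPartialDesign k T) (hN : IsPartialDesign k N) (hS : IsPartialDesign k S)
    (hTN : FacetDisjointSets k T N) (hTS : FacetDisjointSets k T S)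
    (hNS : FacetDisjointSets k N S)
    (hdec : IsKDecompositionOf k (Finset.univ.powersetCard (k - 1)) (T ∪ N ∪ S))
    (A Aalg Anonalg : Finset (Fin n) → Finset (Finset (Fin n)))
    (hedges : ∀ s ∈ S, ∀ e ∈ A s, e.card = k)
    (halgT : ∀ s ∈ S, Aalg s ⊆ T)
    (hcover : ∀ s ∈ S, s.powersetCard (k - 1) ⊆ facetsOf k (A s))
    (halg : ∀ s ∈ S, IsKDecompositionOf k
      (facetsOf k (A s) \ s.powersetCard (k - 1)) (Aalg s))
    (hnonalg : ∀ s ∈ S, IsKDecompositionOf k (facetsOf k (A s)) (Anonalg s))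
    (hdisj : ∀ s ∈ S, ∀ s' ∈ S, s ≠ s' →
      Disjoint (facetsOf k (A s)) (facetsOf k (A s'))) :
    IsKDecompositionOf k (Finset.univ.powersetCard (k - 1))
      (N ∪ (T \ S.biUnion Aalg) ∪ S.biUnion Anonalg) := by
  have huniq := hdec.2
  refine ⟨fun e he => ⟨?_, fun f _ hfc => mem_powersetCard.2 ⟨subset_univ f, hfc⟩⟩, ?_⟩
  · simp only [mem_union, mem_sdiff, mem_biUnion] at he
    obtain (he | ⟨he, -⟩) | ⟨s, hs, he⟩ := he
    · exact hN.1 e he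
    · exact hT.1 e he
    · exact ((hnonalg s hs).1 e he).1
  intro f hf
  have hfc : f.card = k - 1 := (mem_powersetCard.1 hf).2
  by_cases hfA : ∃ s ∈ S, f ∈ facetsOf k (A s)
  · obtain ⟨s, hs, hfs⟩ := hfA
    obtain ⟨e, ⟨he, hfe⟩, heu⟩ := (hnonalg s hs).2 f hfs
    refine ⟨e, ⟨mem_union_right _ (mem_biUnion.2 ⟨s, hs, he⟩), hfe⟩, ?_⟩
    rintro e' ⟨he', hfe'⟩
    -- `f` is covered in the original decomposition by `s` or by an edge of `Aalg s`
    have hold : f ⊆ s ∨ ∃ a ∈ Aalg s, f ⊆ a := by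
      by_cases hsub : f ⊆ s
      · exact Or.inl hsub
      · obtain ⟨a, ha, -⟩ := (halg s hs).2 f
          (mem_sdiff.2 ⟨hfs, fun h => hsub (mem_powersetCard.1 h).1⟩)
        exact Or.inr ⟨a, ha⟩
    simp only [mem_union, mem_sdiff, mem_biUnion] at he'
    obtain (he' | ⟨he', hnot⟩) | ⟨s', hs', he'⟩ := he'
    · obtain hsub | ⟨a, ha, hfa⟩ := hold
      · exact (hNS f hfc ⟨⟨e', he', hfe'⟩, s, hs, hsub⟩).elim
      · exact (hTN f hfc ⟨⟨a, halgT s hs ha, hfa⟩, e', he', hfe'⟩).elim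
    · obtain hsub | ⟨a, ha, hfa⟩ := hold
      · exact (hTS f hfc ⟨⟨e', he', hfe'⟩, s, hs, hsub⟩).elim
      · have hae : e' = a := (huniq f hf).unique
          ⟨mem_union_left _ (mem_union_left _ he'), hfe'⟩
          ⟨mem_union_left _ (mem_union_left _ (halgT s hs ha)), hfa⟩
        exact (hnot ⟨s, hs, hae ▸ ha⟩).elim
    · have hss : s' = s := by
        by_contra hne
        exact disjoint_left.1 (hdisj s' hs' s hs hne)
          (((hnonalg s' hs').1 e' he').2 f hfe' hfc) hfs
      subst hss
      exact heu e' ⟨he', hfe'⟩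
  · obtain ⟨e, ⟨he, hfe⟩, heu⟩ := huniq f hf
    refine ⟨e, ⟨?_, hfe⟩, ?_⟩
    · simp only [mem_union, mem_sdiff, mem_biUnion] at he ⊢
      obtain (he | he) | he := he
      · refine Or.inl (Or.inr ⟨he, ?_⟩)
        rintro ⟨s, hs, hes⟩
        exact hfA ⟨s, hs, (mem_sdiff.1 (((halg s hs).1 e hes).2 f hfe hfc)).1⟩
      · exact Or.inl (Or.inl he)
      · exact (hfA ⟨e, he, hcover e he (mem_powersetCard.2 ⟨hfe, hfc⟩)⟩).elim
    · rintro e' ⟨he', hfe'⟩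
      simp only [mem_union, mem_sdiff, mem_biUnion] at he'
      obtain (he' | ⟨he', -⟩) | ⟨s, hs, he'⟩ := he'
      · exact heu e' ⟨mem_union_left _ (mem_union_right _ he'), hfe'⟩
      · exact heu e' ⟨mem_union_left _ (mem_union_left _ he'), hfe'⟩
      · exact (hfA ⟨s, hs, ((hnonalg s hs).1 e' he').2 f hfe' hfc⟩).elim
end
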